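/- Fix d ≥ 1, orders q = (q_1,…,q_d) with q_k ≥ 2, a quasi-uniformity constant C₀ ≥ 1, and 0 < K_min ≤ K_max. There exist constants ε₀ ∈ (0,1) and 0 < c ≤ C < ∞, depending only on q, d, C₀, K_min and K_max, with the following property. Suppose each direction's knot sequence (N_k interior knots, J_k = N_k + q_k) is quasi-uniform with constant C₀; suppose G is a cumulative distribution function on [0,1]^d whose density lies in [K_min, K_max]; and suppose the design points X_1,…,X_n ∈ [0,1]^d satisfy sup_{x∈[0,1]^d} |G_n(x) − G(x)| ≤ ε₀ ∏_{k=1}^d N_k^{−1}, where G_n is their empirical distribution function. Then for every θ ∈ ℝ^J (J = ∏_k J_k): c n (∏_{k=1}^d J_k^{−1}) ‖θ‖² ≤ θᵀBᵀBθ ≤ C n (∏_{k=1}^d J_k^{−1}) ‖θ‖², where B is the n × J design matrix of tensor-product B-splines and ‖θ‖ is the Euclidean norm. -/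

import Mathlib

open MeasureTheory

/-- A knot sequence `0 = t 0 < t 1 < ⋯ < t N < t (N+1) = 1` on `[0,1]` with `N` interior
knots. -/
structure KnotSeq where
  N : ℕ
  t : ℕ → ℝ
  t0 : t 0 = 0
  tN : t (N + 1) = 1
  mono : ∀ l, l < N + 1 → t l < t (l + 1)

namespace KnotSeq

/-- The extended knot sequence: the boundary knots `0` and `1` are repeated. -/
noncomputable def T (ks : KnotSeq) (l : ℤ) : ℝ :=
  if l ≤ 0 then 0 else if (ks.N + 1 : ℤ) ≤ l then 1 else ks.t l.toNat

/-- The mesh size `Δ = max_{1 ≤ l ≤ N+1} (t l − t (l−1))`. -/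
noncomputable def mesh (ks : KnotSeq) : ℝ :=
  (Finset.Icc 1 (ks.N + 1)).sup' (Finset.nonempty_Icc.mpr (by omega))
    fun l => ks.t l - ks.t (l - 1)

/-- Quasi-uniformity with constant `C₀`: the mesh size is at most `C₀` times every
spacing. -/
def QuasiUniform (ks : KnotSeq) (C₀ : ℝ) : Prop :=
  ∀ l ∈ Finset.Icc 1 (ks.N + 1), ks.mesh ≤ C₀ * (ks.t l - ks.t (l - 1))

end KnotSeq

/-- The normalized B-spline `B_{j,m}` of order `m` for the extended knot sequence `T`,
defined by the Cox–de Boor recursion.  `B_{j,1}` is the indicator of `[T (j−1), T j)`,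
also including the point `1` when `T j = 1 > T (j−1)`; for orders `≥ 2` the recursion is
`B_{j,m}(x) = ((x − T(j−m))/(T(j−1) − T(j−m))) B_{j−1,m−1}(x)
  + ((T j − x)/(T j − T(j−m+1))) B_{j,m−1}(x)`,
a term with zero denominator being zero (Lean's division-by-zero convention). -/
noncomputable def Bspl (T : ℤ → ℝ) : ℕ → ℤ → ℝ → ℝ
  | 0, _, _ => 0
  | 1, j, x =>
      if T (j - 1) ≤ x ∧ (x < T j ∨ (x = 1 ∧ T j = 1 ∧ T (j - 1) < 1)) then 1 else 0
  | m + 2, j, x =>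
      (x - T (j - (m + 2))) / (T (j - 1) - T (j - (m + 2))) * Bspl T (m + 1) (j - 1) x
        + (T j - x) / (T j - T (j - (m + 1))) * Bspl T (m + 1) j x

open scoped Classical

/-!
Write `s = ∑ j, θ j * B j` for the tensor-product spline and `μ` for the empirical measure of the
design, so that `θᵀBᵀBθ = n ∫ s² dμ`. By inclusion–exclusion the discrepancy bound for lower
orthants determines the `μ`-mass of every box up to `2 ^ d` times the discrepancy; hence a box with
side lengths comparable to the meshes has mass comparable to `∏ N_k⁻¹`, as soon as `ε₀` is small
compared with its relative volume.

Upper bound: the B-splines are nonnegative and sum to at most `1`, so Cauchy–Schwarz gives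
`s² ≤ ∑ j, θ j ² 1_{supp B j}`, and each support is contained in such a box.

Lower bound: near a knot cell only `∏ q_k` B-splines are active, and their values at `∏ q_k` nodes
of the cell form a tensor product of `q_k × q_k` matrices. Marsden's identity provides inverses of
these with entries bounded in terms of `q_k` and `C₀` alone. Every active coefficient is therefore
bounded by the values of `s` at the nodes, hence by the values of `s` on small boxes around the
nodes, because the B-splines are Lipschitz at the scale of the mesh.
-/

namespace Bspl

variable {T : ℤ → ℝ} {m : ℕ} {j l : ℤ} {x y : ℝ}

/-- The weight `(x - T (j - m)) / (T j - T (j - m))`, with which the Cox–de Boor recursion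
distributes `Bspl T m j` over `Bspl T (m + 1) (j + 1)` and, as `1 - weight`, over
`Bspl T (m + 1) j`. -/
noncomputable def weight (T : ℤ → ℝ) (m : ℕ) (j : ℤ) (x : ℝ) : ℝ :=
  (x - T (j - m)) / (T j - T (j - m))

theorem mem_Icc_of_ne_zero (hT : Monotone T) :
    ∀ {m : ℕ} {j : ℤ}, Bspl T m j x ≠ 0 → x ∈ Set.Icc (T (j - m)) (T j)
  | 0, _, h => absurd rfl h
  | 1, j, h => by
    obtain ⟨h1, h2 | ⟨rfl, hj, -⟩⟩ := of_not_not fun hn => h (if_neg hn)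
    · exact ⟨by simpa using h1, h2.le⟩
    · exact ⟨by simpa using h1, hj.ge⟩
  | m + 2, j, h => by
    by_cases h1 : Bspl T (m + 1) (j - 1) x = 0
    · have h2 : Bspl T (m + 1) j x ≠ 0 := fun h2 => h (by rw [Bspl, h1, h2]; ring)
      have hx := mem_Icc_of_ne_zero hT h2
      exact ⟨(hT (by push_cast; omega)).trans hx.1, hx.2⟩
    · have hx := mem_Icc_of_ne_zero hT h1
      exact ⟨(hT (by push_cast; omega)).trans hx.1, hx.2.trans (hT (by omega))⟩

theorem knot_lt_of_ne_zero (hT : Monotone T) :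
    ∀ {m : ℕ} {j : ℤ}, Bspl T m j x ≠ 0 → T (j - m) < T j
  | 0, _, h => absurd rfl h
  | 1, j, h => by
    obtain ⟨h1, h2 | ⟨-, hj, hj'⟩⟩ := of_not_not fun hn => h (if_neg hn)
    · simpa using h1.trans_lt h2
    · simpa [hj] using hj'
  | m + 2, j, h => by
    by_cases h1 : Bspl T (m + 1) (j - 1) x = 0
    · have h2 : Bspl T (m + 1) j x ≠ 0 := fun h2 => h (by rw [Bspl, h1, h2]; ring)
      exact (hT (by push_cast; omega)).trans_lt (knot_lt_of_ne_zero hT h2)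
    · exact (hT (by push_cast; omega)).trans_lt
        ((knot_lt_of_ne_zero hT h1).trans_le (hT (by omega)))

theorem add_two_eq (hT : Monotone T) (m : ℕ) (j : ℤ) (x : ℝ) :
    Bspl T (m + 2) j x =
      weight T (m + 1) (j - 1) x * Bspl T (m + 1) (j - 1) x +
        (1 - weight T (m + 1) j x) * Bspl T (m + 1) j x := by
  rw [Bspl, weight, weight]
  congr 1
  · congr 4 <;> (push_cast; ring)
  · by_cases h : Bspl T (m + 1) j x = 0
    · simp only [h, mul_zero]
    · have hpos := sub_pos.2 (knot_lt_of_ne_zero hT h)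
      rw [one_sub_div hpos.ne']
      push_cast
      ring

theorem weight_mem_Icc (hx : x ∈ Set.Icc (T (j - m)) (T j)) :
    weight T m j x ∈ Set.Icc (0 : ℝ) 1 :=
  ⟨div_nonneg (sub_nonneg.2 hx.1) (sub_nonneg.2 (hx.1.trans hx.2)),
    div_le_one_of_le₀ (sub_le_sub_right hx.2 _) (sub_nonneg.2 (hx.1.trans hx.2))⟩

theorem weight_mul_nonneg (hT : Monotone T) (h0 : 0 ≤ Bspl T m j x) :
    0 ≤ weight T m j x * Bspl T m j x := by
  rcases h0.eq_or_lt with h | h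
  · rw [← h, mul_zero]
  · exact mul_nonneg (weight_mem_Icc (mem_Icc_of_ne_zero hT h.ne')).1 h0

theorem one_sub_weight_mul_nonneg (hT : Monotone T) (h0 : 0 ≤ Bspl T m j x) :
    0 ≤ (1 - weight T m j x) * Bspl T m j x := by
  rcases h0.eq_or_lt with h | h
  · rw [← h, mul_zero]
  · exact mul_nonneg (sub_nonneg.2 (weight_mem_Icc (mem_Icc_of_ne_zero hT h.ne')).2) h0

theorem nonneg (hT : Monotone T) : ∀ (m : ℕ) (j : ℤ) (x : ℝ), 0 ≤ Bspl T m j x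
  | 0, _, _ => le_rfl
  | 1, j, x => by rw [Bspl]; split_ifs <;> simp
  | m + 2, j, x => by
    rw [add_two_eq hT]
    exact add_nonneg (weight_mul_nonneg hT (nonneg hT _ _ _))
      (one_sub_weight_mul_nonneg hT (nonneg hT _ _ _))

theorem eq_of_one_ne_zero (hT : Monotone T) (hT1 : ∀ i, T i ≤ 1) {i : ℤ}
    (hi : Bspl T 1 i x ≠ 0) (hj : Bspl T 1 j x ≠ 0) : i = j := by
  wlog hij : i < j generalizing i j
  · rcases (not_lt.1 hij).eq_or_lt with h | h
    exacts [h.symm, (this hj hi h).symm]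
  obtain ⟨-, hi⟩ := of_not_not fun hn => hi (if_neg hn)
  obtain ⟨hj1, hj2⟩ := of_not_not fun hn => hj (if_neg hn)
  have hTij : T i ≤ T (j - 1) := hT (by omega)
  have hTj := hT1 j
  rcases hi with hi | hi <;> rcases hj2 with hj2 | hj2 <;> linarith [hi, hj2]

theorem sum_le_one (hT : Monotone T) (hT1 : ∀ i, T i ≤ 1) (x : ℝ) :
    ∀ (m : ℕ) (S : Finset ℤ), ∑ j ∈ S, Bspl T m j x ≤ 1
  | 0, S => by simp [Bspl]
  | 1, S => by
    have hcard : (S.filter fun j => Bspl T 1 j x ≠ 0).card ≤ 1 :=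
      Finset.card_le_one.2 fun i hi j hj =>
        eq_of_one_ne_zero hT hT1 (Finset.mem_filter.1 hi).2 (Finset.mem_filter.1 hj).2
    have hle (j : ℤ) : Bspl T 1 j x ≤ 1 := by rw [Bspl]; split_ifs <;> simp
    calc ∑ j ∈ S, Bspl T 1 j x = ∑ j ∈ S with Bspl T 1 j x ≠ 0, Bspl T 1 j x :=
          (Finset.sum_filter_ne_zero S).symm
      _ ≤ ∑ j ∈ S with Bspl T 1 j x ≠ 0, (1 : ℝ) := Finset.sum_le_sum fun j _ => hle j
      _ ≤ 1 := by simpa using hcard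
  | m + 2, S => by
    have hshift := Finset.sum_map S (Equiv.subRight (1 : ℤ)).toEmbedding
      fun j => weight T (m + 1) j x * Bspl T (m + 1) j x
    set S' := S.map (Equiv.subRight (1 : ℤ)).toEmbedding
    calc ∑ j ∈ S, Bspl T (m + 2) j x
        = ∑ j ∈ S', weight T (m + 1) j x * Bspl T (m + 1) j x +
            ∑ j ∈ S, (1 - weight T (m + 1) j x) * Bspl T (m + 1) j x := by
          rw [hshift, ← Finset.sum_add_distrib]
          exact Finset.sum_congr rfl fun j _ => add_two_eq hT m j x
      _ ≤ ∑ j ∈ S' ∪ S, weight T (m + 1) j x * Bspl T (m + 1) j x +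
            ∑ j ∈ S' ∪ S, (1 - weight T (m + 1) j x) * Bspl T (m + 1) j x :=
          add_le_add
            (Finset.sum_le_sum_of_subset_of_nonneg Finset.subset_union_left fun j _ _ =>
              weight_mul_nonneg hT (nonneg hT _ _ _))
            (Finset.sum_le_sum_of_subset_of_nonneg Finset.subset_union_right fun j _ _ =>
              one_sub_weight_mul_nonneg hT (nonneg hT _ _ _))
      _ = ∑ j ∈ S' ∪ S, Bspl T (m + 1) j x := by
          rw [← Finset.sum_add_distrib]
          exact Finset.sum_congr rfl fun j _ => by ring
      _ ≤ 1 := sum_le_one hT hT1 x (m + 1) _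

theorem abs_le_one (hT : Monotone T) (hT1 : ∀ i, T i ≤ 1) (m : ℕ) (j : ℤ) (x : ℝ) :
    |Bspl T m j x| ≤ 1 := by
  rw [abs_of_nonneg (nonneg hT m j x)]
  simpa using sum_le_one hT hT1 x m {j}

theorem eq_zero_of_mem_Ico (hT : Monotone T) (hT1 : ∀ i, T i ≤ 1)
    (hx : x ∈ Set.Ico (T l) (T (l + 1))) :
    ∀ {m : ℕ} {j : ℤ}, j ≤ l ∨ l + m < j → Bspl T m j x = 0
  | 0, _, _ => rfl
  | 1, j, hj => if_neg <| by
    rintro ⟨h1, h2⟩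
    have hlast := hT1 (l + 1)
    rcases hj with hj | hj
    · have := hT hj
      rcases h2 with h2 | h2 <;> linarith [hx.1, hx.2]
    · have : T (l + 1) ≤ T (j - 1) := hT (by push_cast at hj; omega)
      linarith [hx.2]
  | m + 2, j, hj => by
    rw [Bspl, eq_zero_of_mem_Ico hT hT1 hx (j := j - 1) (by push_cast at hj ⊢; omega),
      eq_zero_of_mem_Ico hT hT1 hx (j := j) (by push_cast at hj ⊢; omega), mul_zero, mul_zero,
      add_zero]

theorem measurable (T : ℤ → ℝ) : ∀ (m : ℕ) (j : ℤ), Measurable (Bspl T m j)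
  | 0, _ => measurable_const
  | 1, j => by
    refine Measurable.ite ?_ measurable_const measurable_const
    exact measurableSet_Ici.inter
      (measurableSet_Iio.union ((measurableSet_singleton 1).inter (.const _)))
  | m + 2, j =>
    (((measurable_id.sub_const _).div_const _).mul (measurable T (m + 1) (j - 1))).add
      (((measurable_id.const_sub _).div_const _).mul (measurable T (m + 1) j))

theorem abs_weight_sub_le (hT : Monotone T) (hl : T l < T (l + 1)) (hjl : j - m ≤ l)
    (hlj : l + 1 ≤ j) (x y : ℝ) :
    |weight T m j x - weight T m j y| ≤ |x - y| / (T (l + 1) - T l) := by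
  have hsupport : T (l + 1) - T l ≤ T j - T (j - m) := sub_le_sub (hT hlj) (hT hjl)
  have hcell : 0 < T (l + 1) - T l := sub_pos.2 hl
  rw [weight, weight, ← sub_div, sub_sub_sub_cancel_right, abs_div,
    abs_of_pos (hcell.trans_le hsupport)]
  exact div_le_div_of_nonneg_left (abs_nonneg _) hcell hsupport

theorem abs_mul_sub_mul_le {w w' b b' e f : ℝ} (hw : |w - w'| ≤ e)
    (hw' : w' ∈ Set.Icc (0 : ℝ) 1) (hb : |b| ≤ 1) (hbb : |b - b'| ≤ f) :
    |w * b - w' * b'| ≤ e + f :=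
  calc |w * b - w' * b'| = |(w - w') * b + w' * (b - b')| := by ring_nf
    _ ≤ |w - w'| * |b| + |w'| * |b - b'| := by
      simpa only [abs_mul] using abs_add_le ((w - w') * b) (w' * (b - b'))
    _ ≤ e + f := by
      refine add_le_add ((mul_le_of_le_one_right (abs_nonneg _) hb).trans hw)
        ((mul_le_of_le_one_left (abs_nonneg _) ?_).trans hbb)
      rw [abs_of_nonneg hw'.1]
      exact hw'.2

theorem abs_weight_mul_sub_le (hT : Monotone T) (hT1 : ∀ i, T i ≤ 1)
    (hx : x ∈ Set.Ico (T l) (T (l + 1))) (hy : y ∈ Set.Ico (T l) (T (l + 1))) {f : ℝ}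
    (hB : |Bspl T m j x - Bspl T m j y| ≤ f) :
    |weight T m j x * Bspl T m j x - weight T m j y * Bspl T m j y| ≤
        |x - y| / (T (l + 1) - T l) + f ∧
      |(1 - weight T m j x) * Bspl T m j x - (1 - weight T m j y) * Bspl T m j y| ≤
        |x - y| / (T (l + 1) - T l) + f := by
  have hl := hx.1.trans_lt hx.2
  by_cases hj : j ≤ l ∨ l + m < j
  · rw [eq_zero_of_mem_Ico hT hT1 hx hj, eq_zero_of_mem_Ico hT hT1 hy hj]
    simp only [mul_zero, sub_zero, abs_zero, and_self]
    exact add_nonneg (div_nonneg (abs_nonneg _) (sub_nonneg.2 hl.le)) ((abs_nonneg _).trans hB)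
  · push Not at hj
    have hw := abs_weight_sub_le (m := m) hT hl (by omega) hj.1 x y
    have hwy : weight T m j y ∈ Set.Icc (0 : ℝ) 1 :=
      weight_mem_Icc ⟨(hT (by omega)).trans hy.1, hy.2.le.trans (hT hj.1)⟩
    have hb := abs_le_one hT hT1 m j x
    refine ⟨abs_mul_sub_mul_le hw hwy hb hB, abs_mul_sub_mul_le ?_ ?_ hb hB⟩
    · rwa [sub_sub_sub_cancel_left, abs_sub_comm]
    · exact ⟨sub_nonneg.2 hwy.2, sub_le_self _ hwy.1⟩

theorem abs_sub_le (hT : Monotone T) (hT1 : ∀ i, T i ≤ 1) (hx : x ∈ Set.Ico (T l) (T (l + 1)))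
    (hy : y ∈ Set.Ico (T l) (T (l + 1))) :
    ∀ (m : ℕ) (j : ℤ), |Bspl T m j x - Bspl T m j y| ≤ 4 ^ m * (|x - y| / (T (l + 1) - T l))
  | 0, _ => by
    simpa [Bspl] using div_nonneg (abs_nonneg _) (sub_nonneg.2 (hx.1.trans hx.2.le))
  | 1, j => by
    have hnn := div_nonneg (abs_nonneg (x - y)) (sub_nonneg.2 (hx.1.trans hx.2.le))
    suffices Bspl T 1 j x = Bspl T 1 j y by
      rw [this, sub_self, abs_zero]
      positivity
    by_cases hj : j ≤ l ∨ l + (1 : ℕ) < j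
    · rw [eq_zero_of_mem_Ico hT hT1 hx hj, eq_zero_of_mem_Ico hT hT1 hy hj]
    · obtain rfl : j = l + 1 := by push_cast at hj; omega
      rw [Bspl, Bspl, add_sub_cancel_right, if_pos ⟨hx.1, .inl hx.2⟩, if_pos ⟨hy.1, .inl hy.2⟩]
  | m + 2, j => by
    set e := |x - y| / (T (l + 1) - T l)
    have hnn : 0 ≤ e := div_nonneg (abs_nonneg _) (sub_nonneg.2 (hx.1.trans hx.2.le))
    have hterm (i : ℤ) := abs_weight_mul_sub_le hT hT1 hx hy (abs_sub_le hT hT1 hx hy (m + 1) i)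
    calc |Bspl T (m + 2) j x - Bspl T (m + 2) j y|
        ≤ (e + 4 ^ (m + 1) * e) + (e + 4 ^ (m + 1) * e) := by
          rw [add_two_eq hT, add_two_eq hT, add_sub_add_comm]
          exact (abs_add_le _ _).trans (add_le_add (hterm (j - 1)).1 (hterm j).2)
      _ ≤ 4 ^ (m + 2) * e := by
          have : (1 : ℝ) ≤ 4 ^ (m + 1) := one_le_pow₀ (by norm_num)
          rw [show (4 : ℝ) ^ (m + 2) = 4 * 4 ^ (m + 1) by ring]
          nlinarith [mul_le_mul_of_nonneg_right this hnn]

/-- The polynomial `∏ p < m, (y - T (i - p))` in `y`, the coefficient of `Bspl T (m + 1) (i + 1)`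
in Marsden's identity. -/
noncomputable def knotPoly (T : ℤ → ℝ) (m : ℕ) (i : ℤ) (y : ℝ) : ℝ :=
  ∏ p ∈ Finset.range m, (y - T (i - p))

theorem knotPoly_succ (T : ℤ → ℝ) (m : ℕ) (i : ℤ) (y : ℝ) :
    knotPoly T (m + 1) i y = knotPoly T m i y * (y - T (i - m)) :=
  Finset.prod_range_succ _ _

theorem knotPoly_succ_add_one (T : ℤ → ℝ) (m : ℕ) (i : ℤ) (y : ℝ) :
    knotPoly T (m + 1) (i + 1) y = knotPoly T m i y * (y - T (i + 1)) := by
  rw [knotPoly, Finset.prod_range_succ', Nat.cast_zero, sub_zero, knotPoly]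
  simp only [Nat.cast_succ, add_sub_add_right_eq_sub]

theorem knotPoly_mul_weight_add (i : ℤ) (hi : T (i - m) < T (i + 1)) (x y : ℝ) :
    knotPoly T (m + 1) (i + 1) y * weight T (m + 1) (i + 1) x +
        knotPoly T (m + 1) i y * (1 - weight T (m + 1) (i + 1) x) =
      knotPoly T m i y * (y - x) := by
  have hpos := sub_pos.2 hi
  rw [knotPoly_succ_add_one, knotPoly_succ, weight, Nat.cast_succ, add_sub_add_right_eq_sub]
  field_simp
  ring

theorem marsden (hT : Monotone T) (hT1 : ∀ i, T i ≤ 1) (hx : x ∈ Set.Ico (T l) (T (l + 1)))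
    (y : ℝ) : ∀ m : ℕ,
    ∑ r ∈ Finset.range (m + 1), knotPoly T m (l + r) y * Bspl T (m + 1) (l + r + 1) x =
      (y - x) ^ m
  | 0 => by
    rw [Finset.sum_range_one, Nat.cast_zero, add_zero, Bspl, add_sub_cancel_right,
      if_pos ⟨hx.1, .inl hx.2⟩, knotPoly, Finset.range_zero, Finset.prod_empty, mul_one, pow_zero]
  | m + 1 => by
    set B : ℕ → ℝ := fun r => Bspl T (m + 1) (l + r) x
    set w : ℕ → ℝ := fun r => weight T (m + 1) (l + r) x
    set ψ : ℕ → ℝ := fun r => knotPoly T (m + 1) (l + r) y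
    have hcast (r : ℕ) : l + ((r + 1 : ℕ) : ℤ) = l + r + 1 := by push_cast; ring
    have hfirst : B 0 = 0 := eq_zero_of_mem_Ico hT hT1 hx (by simp)
    have hlast : B (m + 2) = 0 := eq_zero_of_mem_Ico hT hT1 hx (by push_cast; omega)
    calc ∑ r ∈ Finset.range (m + 2), ψ r * Bspl T (m + 2) (l + r + 1) x
        = ∑ r ∈ Finset.range (m + 2), ψ r * (w r * B r) +
            ∑ r ∈ Finset.range (m + 2), ψ r * ((1 - w (r + 1)) * B (r + 1)) := by
          rw [← Finset.sum_add_distrib]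
          refine Finset.sum_congr rfl fun r _ => ?_
          simp only [add_two_eq hT, add_sub_cancel_right, mul_add, B, w, hcast]
      _ = ∑ r ∈ Finset.range (m + 1), (ψ (r + 1) * w (r + 1) + ψ r * (1 - w (r + 1))) *
            B (r + 1) := by
          rw [Finset.sum_range_succ', Finset.sum_range_succ _ (m + 1), hfirst, hlast]
          simp only [mul_zero, add_zero, ← Finset.sum_add_distrib]
          exact Finset.sum_congr rfl fun r _ => by ring
      _ = ∑ r ∈ Finset.range (m + 1), knotPoly T m (l + r) y * Bspl T (m + 1) (l + r + 1) x *
            (y - x) := by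
          refine Finset.sum_congr rfl fun r hr => ?_
          rw [Finset.mem_range] at hr
          have hknot : T (l + r - m) < T (l + r + 1) :=
            ((hT (by omega)).trans_lt (hx.1.trans_lt hx.2)).trans_le (hT (by omega))
          simp only [ψ, w, B, hcast, knotPoly_mul_weight_add _ hknot]
          ring
      _ = (y - x) ^ (m + 1) := by
          rw [← Finset.sum_mul, marsden hT hT1 hx y m, pow_succ]

/-- The matrix of all `(n - 1)`-th powers of differences of the points `u i`. -/
def subPowMatrix {R : Type*} [CommRing R] {n : ℕ} (u : Fin n → R) : Matrix (Fin n) (Fin n) R :=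
  .of fun i k => (u i - u k) ^ (n - 1)

theorem subPowMatrix_eq_mul {R : Type*} [CommRing R] {p : ℕ} (u : Fin (p + 1) → R) :
    subPowMatrix u = Matrix.vandermonde u *
      Matrix.diagonal (fun s : Fin (p + 1) => (p.choose s : R)) *
      (Matrix.projVandermonde 1 (-u)).transpose := by
  ext i k
  rw [Matrix.mul_apply, subPowMatrix, Matrix.of_apply, Nat.add_sub_cancel, sub_eq_add_neg,
    add_pow, Finset.sum_range]
  refine Finset.sum_congr rfl fun s _ => ?_
  rw [Matrix.mul_diagonal, Matrix.vandermonde_apply, Matrix.transpose_apply,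
    Matrix.projVandermonde_apply, Fin.val_rev, Pi.one_apply, one_pow, Pi.neg_apply,
    Nat.add_sub_add_right]
  ring

theorem det_subPowMatrix_ne_zero {K : Type*} [Field K] [CharZero K] {n : ℕ} {u : Fin n → K}
    (hu : Function.Injective u) : (subPowMatrix u).det ≠ 0 := by
  cases n with
  | zero => simp
  | succ p =>
    rw [subPowMatrix_eq_mul, Matrix.det_mul, Matrix.det_mul, Matrix.det_diagonal,
      Matrix.det_transpose, Matrix.det_projVandermonde]
    refine mul_ne_zero (mul_ne_zero (Matrix.det_vandermonde_ne_zero_iff.2 hu) ?_) ?_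
    · exact Finset.prod_ne_zero_iff.2 fun s _ =>
        Nat.cast_ne_zero.2 (Nat.choose_pos (Nat.lt_succ_iff.1 s.2)).ne'
    · refine Finset.prod_ne_zero_iff.2 fun i _ => Finset.prod_ne_zero_iff.2 fun j hj => ?_
      have hij : u i ≠ u j := hu.ne (Finset.mem_Ioi.1 hj).ne
      simpa [neg_add_eq_sub, sub_eq_zero] using hij.symm

/-- The `q` equidistant reference nodes `1 / (q + 1), …, q / (q + 1)` of the unit interval. -/
noncomputable def refNode (q : ℕ) (k : Fin q) : ℝ := ((k : ℕ) + 1) / (q + 1)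

theorem refNode_injective (q : ℕ) : Function.Injective (refNode q) := fun a b h => by
  have hq : (q : ℝ) + 1 ≠ 0 := by positivity
  exact Fin.ext (by simpa [refNode, div_left_inj' hq] using h)

theorem inv_le_refNode (q : ℕ) (k : Fin q) : ((q : ℝ) + 1)⁻¹ ≤ refNode q k := by
  rw [← one_div, refNode]
  gcongr
  simp

theorem refNode_le (q : ℕ) (k : Fin q) : refNode q k ≤ 1 - ((q : ℝ) + 1)⁻¹ := by
  have hk : ((k : ℕ) : ℝ) + 1 ≤ q := by exact_mod_cast k.2
  rw [refNode, div_le_iff₀ (by positivity), sub_mul, inv_mul_cancel₀ (by positivity)]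
  linarith

theorem refNode_mem_Ioo (q : ℕ) (k : Fin q) : refNode q k ∈ Set.Ioo (0 : ℝ) 1 := by
  have : 0 < ((q : ℝ) + 1)⁻¹ := by positivity
  exact ⟨this.trans_le (inv_le_refNode q k), by linarith [refNode_le q k]⟩

/-- The reference nodes transported to the knot interval `[T l, T (l + 1))`. -/
noncomputable def node (T : ℤ → ℝ) (l : ℤ) (q : ℕ) (k : Fin q) : ℝ :=
  T l + (T (l + 1) - T l) * refNode q k

theorem node_mem_Ico {q : ℕ} (hl : T l < T (l + 1)) (k : Fin q) :
    node T l q k ∈ Set.Ico (T l) (T (l + 1)) := by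
  obtain ⟨h0, h1⟩ := refNode_mem_Ioo q k
  rw [node]
  constructor <;> nlinarith [sub_pos.2 hl]

/-- The values of the `q` B-splines of order `q` that are active on `[T l, T (l + 1))` at the
nodes of that interval. -/
noncomputable def collocation (T : ℤ → ℝ) (l : ℤ) (q : ℕ) : Matrix (Fin q) (Fin q) ℝ :=
  .of fun r k => Bspl T q (l + (r : ℕ) + 1) (node T l q k)

/-- The coefficients of Marsden's identity at the nodes of `[T l, T (l + 1))`, normalized to be
invariant under affine changes of the knots. -/
noncomputable def marsdenMatrix (T : ℤ → ℝ) (l : ℤ) (q : ℕ) : Matrix (Fin q) (Fin q) ℝ :=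
  .of fun i r => knotPoly T (q - 1) (l + (r : ℕ)) (node T l q i) / (T (l + 1) - T l) ^ (q - 1)

theorem marsdenMatrix_mul_collocation (hT : Monotone T) (hT1 : ∀ i, T i ≤ 1)
    (hl : T l < T (l + 1)) :
    ∀ q, marsdenMatrix T l q * collocation T l q = subPowMatrix (refNode q)
  | 0 => Subsingleton.elim _ _
  | p + 1 => by
    ext i k
    have hpos := sub_pos.2 hl
    have hM := marsden hT hT1 (node_mem_Ico hl k) (node T l (p + 1) i) p
    rw [Finset.sum_range] at hM
    calc (marsdenMatrix T l (p + 1) * collocation T l (p + 1)) i k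
        = (node T l (p + 1) i - node T l (p + 1) k) ^ p / (T (l + 1) - T l) ^ p := by
          rw [Matrix.mul_apply, ← hM, Finset.sum_div]
          exact Finset.sum_congr rfl fun r _ => div_mul_eq_mul_div _ _ _
      _ = (refNode (p + 1) i - refNode (p + 1) k) ^ p := by
          rw [← div_pow, node, node, add_sub_add_left_eq_sub, ← mul_sub,
            mul_div_cancel_left₀ _ hpos.ne']

theorem abs_knotPoly_le {a : ℝ} (h : ∀ p < m, |y - T (j - p)| ≤ a) :
    |knotPoly T m j y| ≤ a ^ m := by
  rw [knotPoly, Finset.abs_prod]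
  calc ∏ p ∈ Finset.range m, |y - T (j - p)| ≤ ∏ _p ∈ Finset.range m, a :=
        Finset.prod_le_prod (fun _ _ => abs_nonneg _) fun p hp => h p (Finset.mem_range.1 hp)
    _ = a ^ m := by simp

theorem abs_marsdenMatrix_le {q : ℕ} {R : ℝ} (hl : T l < T (l + 1))
    (hR : ∀ i, |i - l| ≤ q → |T i - T l| ≤ R * (T (l + 1) - T l)) (i r : Fin q) :
    |marsdenMatrix T l q i r| ≤ (1 + R) ^ (q - 1) := by
  have hpos := sub_pos.2 hl
  have hnode := node_mem_Ico hl i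
  rw [marsdenMatrix, Matrix.of_apply, abs_div, abs_pow, abs_of_pos hpos,
    div_le_iff₀ (pow_pos hpos _), ← mul_pow]
  refine abs_knotPoly_le fun p hp => ?_
  calc |node T l q i - T (l + (r : ℕ) - p)|
      ≤ |node T l q i - T l| + |T l - T (l + (r : ℕ) - p)| := _root_.abs_sub_le _ _ _
    _ ≤ (T (l + 1) - T l) + R * (T (l + 1) - T l) := by
        refine add_le_add ?_ ?_
        · rw [abs_of_nonneg (sub_nonneg.2 hnode.1)]
          exact sub_le_sub_right hnode.2.le _
        · rw [abs_sub_comm]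
          exact hR _ (by have := r.2; rw [abs_le]; omega)
    _ = (1 + R) * (T (l + 1) - T l) := by ring

/-- A bound for the norms of the functionals dual to the active B-splines of order `q`, when the
`q` knots on either side of a knot interval are within `R` times its length. -/
noncomputable def dualBound (q : ℕ) (R : ℝ) : ℝ :=
  max 1 ((∑ k, ∑ i, |(subPowMatrix (refNode q))⁻¹ k i|) * (1 + R) ^ (q - 1))

theorem dualBound_pos (q : ℕ) (R : ℝ) : 0 < dualBound q R :=
  lt_max_of_lt_left one_pos

theorem exists_collocation_mul_eq_one (hT : Monotone T) (hT1 : ∀ i, T i ≤ 1) {q : ℕ} {R : ℝ}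
    (hl : T l < T (l + 1)) (hR : ∀ i, |i - l| ≤ q → |T i - T l| ≤ R * (T (l + 1) - T l)) :
    ∃ M : Matrix (Fin q) (Fin q) ℝ,
      collocation T l q * M = 1 ∧ ∀ r, ∑ k, |M k r| ≤ dualBound q R := by
  refine ⟨(subPowMatrix (refNode q))⁻¹ * marsdenMatrix T l q, mul_eq_one_comm.1 ?_,
    fun r => le_max_of_le_right ?_⟩
  · rw [Matrix.mul_assoc, marsdenMatrix_mul_collocation hT hT1 hl]
    exact Matrix.nonsing_inv_mul _ (det_subPowMatrix_ne_zero (refNode_injective q)).isUnit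
  · simp only [Finset.sum_mul]
    refine Finset.sum_le_sum fun k _ => ?_
    rw [Matrix.mul_apply]
    refine (Finset.abs_sum_le_sum_abs _ _).trans (Finset.sum_le_sum fun i _ => ?_)
    rw [abs_mul]
    exact mul_le_mul_of_nonneg_left (abs_marsdenMatrix_le hl hR i r) (abs_nonneg _)

end Bspl

namespace KnotSeq

variable (ks : KnotSeq)

theorem T_of_nonpos {i : ℤ} (hi : i ≤ 0) : ks.T i = 0 :=
  if_pos hi

theorem T_of_le {i : ℤ} (hi : ks.N + 1 ≤ i) : ks.T i = 1 := by
  rw [T, if_neg (by omega), if_pos hi]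

theorem T_natCast {l : ℕ} (hl : l ≤ ks.N + 1) : ks.T l = ks.t l := by
  rcases Nat.eq_zero_or_pos l with rfl | h0
  · rw [ks.T_of_nonpos (by simp), ks.t0]
  rcases hl.eq_or_lt with rfl | h1
  · rw [ks.T_of_le (by simp), ks.tN]
  · rw [T, if_neg (by omega), if_neg (by omega), Int.toNat_natCast]

theorem T_natCast_add_one {l : ℕ} (hl : l < ks.N + 1) : ks.T (l + 1) = ks.t (l + 1) :=
  ks.T_natCast (Nat.succ_le_of_lt hl)

theorem T_lt_T_add_one {l : ℕ} (hl : l < ks.N + 1) : ks.T l < ks.T (l + 1) := by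
  rw [ks.T_natCast hl.le, ks.T_natCast_add_one hl]
  exact ks.mono l hl

theorem T_add_one_sub_le_mesh {l : ℕ} (hl : l < ks.N + 1) : ks.T (l + 1) - ks.T l ≤ ks.mesh := by
  rw [ks.T_natCast hl.le, ks.T_natCast_add_one hl]
  exact Finset.le_sup' (fun l => ks.t l - ks.t (l - 1)) (Finset.mem_Icc.2 ⟨l.succ_pos, hl⟩)

theorem mesh_pos : 0 < ks.mesh :=
  (sub_pos.2 (ks.T_lt_T_add_one ks.N.succ_pos)).trans_le (ks.T_add_one_sub_le_mesh ks.N.succ_pos)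

theorem T_add_one_sub_mem_Icc (i : ℤ) : ks.T (i + 1) - ks.T i ∈ Set.Icc 0 ks.mesh := by
  have hmesh := ks.mesh_pos.le
  rcases lt_or_ge i 0 with h0 | h0
  · simpa [ks.T_of_nonpos h0.le, ks.T_of_nonpos (Int.add_one_le_of_lt h0)] using hmesh
  rcases lt_or_ge i (ks.N + 1) with h1 | h1
  · lift i to ℕ using h0
    have hi : i < ks.N + 1 := by omega
    exact ⟨sub_nonneg.2 (ks.T_lt_T_add_one hi).le, ks.T_add_one_sub_le_mesh hi⟩
  · simpa [ks.T_of_le h1, ks.T_of_le (h1.trans (Int.lt_add_one_of_le le_rfl).le)] using hmesh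

theorem T_monotone : Monotone ks.T :=
  monotone_int_of_le_succ fun i => sub_nonneg.1 (ks.T_add_one_sub_mem_Icc i).1

theorem T_le_one (i : ℤ) : ks.T i ≤ 1 :=
  (ks.T_monotone (le_max_left i (ks.N + 1))).trans_eq (ks.T_of_le (le_max_right _ _))

theorem T_nonneg (i : ℤ) : 0 ≤ ks.T i :=
  (ks.T_of_nonpos (min_le_right i 0)).symm.trans_le (ks.T_monotone (min_le_left _ _))

theorem T_add_natCast_sub_le (i : ℤ) : ∀ p : ℕ, ks.T (i + p) - ks.T i ≤ p * ks.mesh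
  | 0 => by simp
  | p + 1 => by
    have hstep := (ks.T_add_one_sub_mem_Icc (i + p)).2
    have ih := T_add_natCast_sub_le i p
    push_cast
    rw [← add_assoc]
    linarith

theorem abs_T_sub_le {i l : ℤ} {p : ℕ} (h : |i - l| ≤ p) : |ks.T i - ks.T l| ≤ p * ks.mesh := by
  rw [abs_sub_le_iff] at h ⊢
  have key {a b : ℤ} (hab : a - b ≤ p) : ks.T a - ks.T b ≤ p * ks.mesh :=
    (sub_le_sub_right (ks.T_monotone (by omega)) _).trans (ks.T_add_natCast_sub_le b p)
  exact ⟨key h.1, key h.2⟩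

theorem inv_le_mesh : ((ks.N : ℝ) + 1)⁻¹ ≤ ks.mesh := by
  have h := ks.T_add_natCast_sub_le 0 (ks.N + 1)
  rw [ks.T_of_nonpos le_rfl, ks.T_of_le (by simp)] at h
  push_cast at h
  rw [inv_le_iff_one_le_mul₀' (by positivity)]
  linarith

namespace QuasiUniform

variable {ks} {C₀ : ℝ}

theorem mesh_le_mul (h : ks.QuasiUniform C₀) {l : ℕ} (hl : l < ks.N + 1) :
    ks.mesh ≤ C₀ * (ks.T (l + 1) - ks.T l) := by
  rw [ks.T_natCast hl.le, ks.T_natCast_add_one hl]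
  exact h (l + 1) (Finset.mem_Icc.2 ⟨l.succ_pos, hl⟩)

theorem pos (h : ks.QuasiUniform C₀) : 0 < C₀ :=
  pos_of_mul_pos_left (ks.mesh_pos.trans_le (h.mesh_le_mul ks.N.succ_pos))
    (sub_nonneg.2 (ks.T_lt_T_add_one ks.N.succ_pos).le)

theorem mesh_le (h : ks.QuasiUniform C₀) : ks.mesh ≤ C₀ * ((ks.N : ℝ) + 1)⁻¹ := by
  have hsum : ∑ _l ∈ Finset.range (ks.N + 1), ks.mesh ≤
      ∑ l ∈ Finset.range (ks.N + 1), C₀ * (ks.t (l + 1) - ks.t l) :=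
    Finset.sum_le_sum fun l hl =>
      h (l + 1) (Finset.mem_Icc.2 ⟨l.succ_pos, Finset.mem_range.1 hl⟩)
  rw [← Finset.mul_sum, Finset.sum_range_sub, ks.tN, ks.t0, Finset.sum_const,
    Finset.card_range, nsmul_eq_mul, sub_zero, mul_one, Nat.cast_succ] at hsum
  rwa [← div_eq_mul_inv, le_div_iff₀' (by positivity)]

theorem inv_le (h : ks.QuasiUniform C₀) {l : ℕ} (hl : l < ks.N + 1) :
    C₀⁻¹ * ((ks.N : ℝ) + 1)⁻¹ ≤ ks.T (l + 1) - ks.T l := by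
  rw [inv_mul_le_iff₀ h.pos]
  exact ks.inv_le_mesh.trans (h.mesh_le_mul hl)

theorem abs_T_sub_le (h : ks.QuasiUniform C₀) {q l : ℕ} (hl : l < ks.N + 1) {i : ℤ}
    (hi : |i - l| ≤ q) : |ks.T i - ks.T l| ≤ q * C₀ * (ks.T (l + 1) - ks.T l) := by
  rw [mul_assoc]
  exact (ks.abs_T_sub_le hi).trans (mul_le_mul_of_nonneg_left (h.mesh_le_mul hl) (by positivity))

end QuasiUniform

end KnotSeq

section TensorEval

theorem abs_prod_sub_prod_le {ι : Type*} (s : Finset ι) {a b : ι → ℝ} (ha : ∀ k ∈ s, |a k| ≤ 1)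
    (hb : ∀ k ∈ s, |b k| ≤ 1) : |∏ k ∈ s, a k - ∏ k ∈ s, b k| ≤ ∑ k ∈ s, |a k - b k| := by
  induction s using Finset.cons_induction with
  | empty => simp
  | cons i s hi ih =>
    simp only [Finset.mem_cons, forall_eq_or_imp] at ha hb
    have hprod : |∏ k ∈ s, b k| ≤ 1 := by
      rw [Finset.abs_prod]
      exact Finset.prod_le_one (fun _ _ => abs_nonneg _) hb.2
    rw [Finset.prod_cons, Finset.prod_cons, Finset.sum_cons]
    calc |a i * ∏ k ∈ s, a k - b i * ∏ k ∈ s, b k|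
        = |(a i - b i) * ∏ k ∈ s, b k + a i * (∏ k ∈ s, a k - ∏ k ∈ s, b k)| := by ring_nf
      _ ≤ |a i - b i| * |∏ k ∈ s, b k| + |a i| * |∏ k ∈ s, a k - ∏ k ∈ s, b k| := by
        simpa only [abs_mul] using
          abs_add_le ((a i - b i) * ∏ k ∈ s, b k) (a i * (∏ k ∈ s, a k - ∏ k ∈ s, b k))
      _ ≤ |a i - b i| + ∑ k ∈ s, |a k - b k| :=
        add_le_add (mul_le_of_le_one_right (abs_nonneg _) hprod)
          ((mul_le_of_le_one_left (abs_nonneg _) ha.1).trans (ih ha.2 hb.2))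

variable {ι : Type*} [Fintype ι] [DecidableEq ι] {κ κ' : ι → Type*} [∀ k, Fintype (κ k)]

/-- The contraction of the coefficient tensor `θ` with the elementary tensor `⨂ k, b k`. -/
def tensorEval (θ : (∀ k, κ k) → ℝ) (b : ∀ k, κ k → ℝ) : ℝ :=
  ∑ r, θ r * ∏ k, b k (r k)

theorem tensorEval_sq_le (θ : (∀ k, κ k) → ℝ) {b : ∀ k, κ k → ℝ} (hb : ∀ k r, 0 ≤ b k r)
    (hsum : ∀ k, ∑ r, b k r ≤ 1) : tensorEval θ b ^ 2 ≤ ∑ r, θ r ^ 2 * ∏ k, b k (r k) := by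
  have hprod (r : ∀ k, κ k) : 0 ≤ ∏ k, b k (r k) := Finset.prod_nonneg fun k _ => hb k _
  calc tensorEval θ b ^ 2
      ≤ (∑ r : ∀ k, κ k, ∏ k, b k (r k)) * ∑ r, θ r ^ 2 * ∏ k, b k (r k) :=
        Finset.sum_sq_le_sum_mul_sum_of_sq_le_mul _ (fun r _ => hprod r)
          (fun r _ => mul_nonneg (sq_nonneg _) (hprod r)) fun r _ => by ring_nf; rfl
    _ ≤ ∑ r, θ r ^ 2 * ∏ k, b k (r k) := by
        refine mul_le_of_le_one_left
          (Finset.sum_nonneg fun r _ => mul_nonneg (sq_nonneg _) (hprod r)) ?_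
        rw [← Fintype.prod_sum]
        exact Finset.prod_le_one (fun k _ => Finset.sum_nonneg fun r _ => hb k r) fun k _ => hsum k

theorem abs_tensorEval_sub_le {θ : (∀ k, κ k) → ℝ} {Θ : ℝ} (hθ : ∀ r, |θ r| ≤ Θ)
    {b b' : ∀ k, κ k → ℝ} (hb : ∀ k r, |b k r| ≤ 1) (hb' : ∀ k r, |b' k r| ≤ 1) {e : ι → ℝ}
    (he : ∀ k r, |b k r - b' k r| ≤ e k) :
    |tensorEval θ b - tensorEval θ b'| ≤ Θ * (Fintype.card (∀ k, κ k) * ∑ k, e k) := by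
  rw [tensorEval, tensorEval, ← Finset.sum_sub_distrib]
  calc |∑ r, (θ r * ∏ k, b k (r k) - θ r * ∏ k, b' k (r k))|
      ≤ ∑ r, |θ r * ∏ k, b k (r k) - θ r * ∏ k, b' k (r k)| := Finset.abs_sum_le_sum_abs _ _
    _ ≤ ∑ _r : ∀ k, κ k, Θ * ∑ k, e k := by
        refine Finset.sum_le_sum fun r _ => ?_
        rw [← mul_sub, abs_mul]
        have hprod := (abs_prod_sub_prod_le Finset.univ (fun k _ => hb k (r k))
          fun k _ => hb' k (r k)).trans (Finset.sum_le_sum fun k _ => he k (r k))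
        exact mul_le_mul (hθ r) hprod (abs_nonneg _) ((abs_nonneg _).trans (hθ r))
    _ = Θ * (Fintype.card (∀ k, κ k) * ∑ k, e k) := by
        rw [Finset.sum_const, Finset.card_univ, nsmul_eq_mul]
        ring

theorem abs_le_two_mul_abs_tensorEval {θ : (∀ k, κ k) → ℝ} {P : ℝ} (hP : 0 ≤ P)
    {b b' : ∀ k, κ k → ℝ} (hb : ∀ k r, |b k r| ≤ 1) (hb' : ∀ k r, |b' k r| ≤ 1)
    (hθ : ∀ r, |θ r| ≤ P * |tensorEval θ b|) {e : ι → ℝ} (he : ∀ k r, |b k r - b' k r| ≤ e k)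
    (hPe : P * (Fintype.card (∀ k, κ k) * ∑ k, e k) ≤ 1 / 2) (r : ∀ k, κ k) :
    |θ r| ≤ 2 * P * |tensorEval θ b'| := by
  have : Nonempty (∀ k, κ k) := ⟨r⟩
  obtain ⟨r₀, hr₀⟩ := Finite.exists_max fun r => |θ r|
  have hdiff := abs_tensorEval_sub_le hr₀ hb hb' he
  have hmax : |θ r₀| ≤ P * |tensorEval θ b'| + |θ r₀| * (1 / 2) :=
    calc |θ r₀| ≤ P * |tensorEval θ b| := hθ r₀
      _ ≤ P * (|tensorEval θ b'| + |θ r₀| * (Fintype.card (∀ k, κ k) * ∑ k, e k)) := by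
          refine mul_le_mul_of_nonneg_left ?_ hP
          linarith [abs_sub_abs_le_abs_sub (tensorEval θ b) (tensorEval θ b')]
      _ = P * |tensorEval θ b'| + |θ r₀| * (P * (Fintype.card (∀ k, κ k) * ∑ k, e k)) := by ring
      _ ≤ P * |tensorEval θ b'| + |θ r₀| * (1 / 2) := by gcongr
  linarith [hr₀ r]

variable [∀ k, Fintype (κ' k)]

theorem sum_tensorEval_mul_prod [∀ k, DecidableEq (κ k)] (θ : (∀ k, κ k) → ℝ)
    {A : ∀ k, Matrix (κ k) (κ' k) ℝ} {M : ∀ k, Matrix (κ' k) (κ k) ℝ} (hAM : ∀ k, A k * M k = 1)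
    (r : ∀ k, κ k) :
    ∑ m : ∀ k, κ' k, tensorEval θ (fun k s => A k s (m k)) * ∏ k, M k (m k) (r k) = θ r := by
  have hdual (s : ∀ k, κ k) :
      ∑ m : ∀ k, κ' k, (∏ k, A k (s k) (m k)) * ∏ k, M k (m k) (r k) = if s = r then 1 else 0 :=
    calc _ = ∏ k, (A k * M k) (s k) (r k) := by
          simp only [← Finset.prod_mul_distrib, Matrix.mul_apply, Fintype.prod_sum]
      _ = if s = r then 1 else 0 := by
          simp only [hAM, Matrix.one_apply, Finset.prod_ite_zero, Finset.prod_const_one,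
            Finset.mem_univ, true_imp_iff, funext_iff]
  calc _ = ∑ s, θ s * ∑ m : ∀ k, κ' k, (∏ k, A k (s k) (m k)) * ∏ k, M k (m k) (r k) := by
        simp only [tensorEval, Finset.sum_mul, Finset.mul_sum, ← mul_assoc]
        exact Finset.sum_comm
    _ = θ r := by simp [hdual]

theorem exists_forall_abs_le_prod_mul_abs_tensorEval [∀ k, DecidableEq (κ k)]
    [∀ k, Nonempty (κ' k)] (θ : (∀ k, κ k) → ℝ) {A : ∀ k, Matrix (κ k) (κ' k) ℝ}
    {M : ∀ k, Matrix (κ' k) (κ k) ℝ} (hAM : ∀ k, A k * M k = 1) {D : ι → ℝ}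
    (hM : ∀ k r, ∑ m, |M k m r| ≤ D k) :
    ∃ m : ∀ k, κ' k, ∀ r, |θ r| ≤ (∏ k, D k) * |tensorEval θ fun k s => A k s (m k)| := by
  set s : (∀ k, κ' k) → ℝ := fun m => tensorEval θ fun k s => A k s (m k)
  obtain ⟨m₀, hm₀⟩ := Finite.exists_max fun m => |s m|
  refine ⟨m₀, fun r => ?_⟩
  calc |θ r| = |∑ m, s m * ∏ k, M k (m k) (r k)| := by rw [sum_tensorEval_mul_prod θ hAM r]
    _ ≤ ∑ m, |s m| * ∏ k, |M k (m k) (r k)| := by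
        simpa only [abs_mul, Finset.abs_prod] using
          Finset.abs_sum_le_sum_abs (fun m => s m * ∏ k, M k (m k) (r k)) Finset.univ
    _ ≤ ∑ m, |s m₀| * ∏ k, |M k (m k) (r k)| :=
        Finset.sum_le_sum fun m _ => mul_le_mul_of_nonneg_right (hm₀ m) (by positivity)
    _ = (∏ k, ∑ m, |M k m (r k)|) * |s m₀| := by rw [← Finset.mul_sum, Fintype.prod_sum, mul_comm]
    _ ≤ (∏ k, D k) * |s m₀| := by
        gcongr with k
        exact hM k (r k)

end TensorEval

/-- The unit cube `[0, 1]^ι`. -/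
def unitCube (ι : Type*) : Set (ι → ℝ) :=
  Set.univ.pi fun _ => Set.Icc 0 1

/-- The measure on the unit cube with density `g` with respect to Lebesgue measure. -/
noncomputable def cubeDensity {ι : Type*} [Fintype ι] (g : (ι → ℝ) → ℝ) : Measure (ι → ℝ) :=
  (volume.restrict (unitCube ι)).withDensity fun y => ENNReal.ofReal (g y)

section MassOfBoxes

variable {ι : Type*} {x y : ι → ℝ}

theorem mem_unitCube_iff : x ∈ unitCube ι ↔ 0 ≤ x ∧ x ≤ 1 := by
  simp only [unitCube, Set.mem_univ_pi, Set.mem_Icc, Pi.le_def, Pi.zero_apply, Pi.one_apply,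
    forall_and]

theorem Iic_inter_unitCube (hx : x ≤ 1) :
    Set.Iic x ∩ unitCube ι = Set.univ.pi fun k => Set.Icc 0 (x k) := by
  ext y
  simp only [Set.mem_inter_iff, Set.mem_Iic, mem_unitCube_iff, Set.mem_univ_pi, Set.mem_Icc,
    forall_and]
  exact ⟨fun h => ⟨h.2.1, h.1⟩, fun h => ⟨h.2, h.1, fun k => (h.2 k).trans (hx k)⟩⟩

theorem Iic_disjoint_unitCube (hx : ¬0 ≤ x) : Disjoint (Set.Iic x) (unitCube ι) :=
  Set.disjoint_left.2 fun _ hy hy' => hx ((mem_unitCube_iff.1 hy').1.trans hy)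

theorem measurableSet_unitCube [Countable ι] : MeasurableSet (unitCube ι) :=
  .univ_pi fun _ => measurableSet_Icc

theorem volume_unitCube [Fintype ι] : volume (unitCube ι) = 1 := by
  rw [unitCube, volume_pi_pi]
  simp

theorem indicator_Ioc_eq_sub {a b : ℝ} (hab : a ≤ b) (s : ℝ) :
    (Set.Ioc a b).indicator (1 : ℝ → ℝ) s =
      (Set.Iic b).indicator 1 s - (Set.Iic a).indicator 1 s := by
  rw [← Set.Iic_sdiff_Iic, Set.indicator_sdiff (Set.Iic_subset_Iic.2 hab), Pi.sub_apply]

variable [Fintype ι]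

theorem indicator_pi_Ioc_eq_sum [DecidableEq ι] {α β : ι → ℝ} (hαβ : α ≤ β) (y : ι → ℝ) :
    (Set.univ.pi fun k => Set.Ioc (α k) (β k)).indicator (1 : (ι → ℝ) → ℝ) y =
      ∑ t : Finset ι, (-1) ^ t.card * (Set.Iic (t.piecewise α β)).indicator 1 y := by
  have hIic (x : ι → ℝ) : (Set.Iic x).indicator (1 : (ι → ℝ) → ℝ) y =
      ∏ k, (Set.Iic (x k)).indicator 1 (y k) := by
    rw [← Set.pi_univ_Iic, ← Finset.coe_univ, Set.indicator_pi_one_apply]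
  rw [← Finset.coe_univ, Set.indicator_pi_one_apply]
  simp only [indicator_Ioc_eq_sub (hαβ _), Finset.prod_sub, Finset.powerset_univ]
  refine Finset.sum_congr rfl fun t _ => ?_
  have hsplit := Finset.prod_piecewise Finset.univ t
    (fun k => (Set.Iic (α k)).indicator (1 : ℝ → ℝ) (y k))
    fun k => (Set.Iic (β k)).indicator 1 (y k)
  rw [Finset.univ_inter] at hsplit
  rw [hIic, mul_assoc, mul_comm (∏ k ∈ _, _), ← hsplit]
  refine congrArg _ (Finset.prod_congr rfl fun k _ => ?_)
  by_cases hk : k ∈ t <;> simp only [Finset.piecewise, hk, if_true, if_false]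

theorem measureReal_pi_Ioc_eq_sum [DecidableEq ι] (μ : Measure (ι → ℝ)) [IsFiniteMeasure μ]
    {α β : ι → ℝ} (hαβ : α ≤ β) :
    μ.real (Set.univ.pi fun k => Set.Ioc (α k) (β k)) =
      ∑ t : Finset ι, (-1) ^ t.card * μ.real (Set.Iic (t.piecewise α β)) := by
  rw [← integral_indicator_one (.univ_pi fun _ => measurableSet_Ioc)]
  simp only [indicator_pi_Ioc_eq_sum hαβ]
  rw [integral_finsetSum _ fun t _ =>
    (Integrable.indicator (f := 1) (integrable_const (1 : ℝ)) measurableSet_Iic).const_mul _]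
  refine Finset.sum_congr rfl fun t _ => ?_
  rw [integral_const_mul, integral_indicator_one measurableSet_Iic]

theorem abs_measureReal_pi_Ioc_sub_le {μ ν : Measure (ι → ℝ)} [IsFiniteMeasure μ]
    [IsFiniteMeasure ν] {E : ℝ} {α β : ι → ℝ} (hαβ : α ≤ β)
    (hE : ∀ x ≤ β, |μ.real (Set.Iic x) - ν.real (Set.Iic x)| ≤ E) :
    |μ.real (Set.univ.pi fun k => Set.Ioc (α k) (β k)) -
        ν.real (Set.univ.pi fun k => Set.Ioc (α k) (β k))| ≤ 2 ^ Fintype.card ι * E := by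
  classical
  rw [measureReal_pi_Ioc_eq_sum μ hαβ, measureReal_pi_Ioc_eq_sum ν hαβ, ← Finset.sum_sub_distrib]
  calc _ ≤ ∑ _t : Finset ι, E := by
        refine (Finset.abs_sum_le_sum_abs _ _).trans (Finset.sum_le_sum fun t _ => ?_)
        rw [← mul_sub, abs_mul, abs_pow, abs_neg, abs_one, one_pow, one_mul]
        exact hE _ (t.piecewise_le_of_le_of_le hαβ le_rfl)
    _ = 2 ^ Fintype.card ι * E := by simp

end MassOfBoxes

section CubeDensity

variable {ι : Type*} [Fintype ι] {g : (ι → ℝ) → ℝ} {a b : ℝ} {s : Set (ι → ℝ)}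

theorem cubeDensity_real (hg : Measurable g) (hg0 : ∀ y ∈ unitCube ι, 0 ≤ g y)
    (hs : MeasurableSet s) : (cubeDensity g).real s = ∫ y in s ∩ unitCube ι, g y := by
  have hnn : 0 ≤ᵐ[volume.restrict (s ∩ unitCube ι)] g :=
    ae_restrict_of_forall_mem (hs.inter measurableSet_unitCube) fun y hy => hg0 y hy.2
  rw [integral_eq_lintegral_of_nonneg_ae hnn hg.aestronglyMeasurable, measureReal_def, cubeDensity,
    withDensity_apply _ hs, Measure.restrict_restrict hs]

theorem cubeDensity_le (hb : ∀ y ∈ unitCube ι, g y ≤ b) :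
    cubeDensity g ≤ ENNReal.ofReal b • volume.restrict (unitCube ι) := by
  rw [← withDensity_const]
  exact withDensity_mono <| ae_restrict_of_forall_mem measurableSet_unitCube fun y hy =>
    ENNReal.ofReal_le_ofReal (hb y hy)

theorem le_cubeDensity (ha : ∀ y ∈ unitCube ι, a ≤ g y) :
    ENNReal.ofReal a • volume.restrict (unitCube ι) ≤ cubeDensity g := by
  rw [← withDensity_const]
  exact withDensity_mono <| ae_restrict_of_forall_mem measurableSet_unitCube fun y hy =>
    ENNReal.ofReal_le_ofReal (ha y hy)

theorem isFiniteMeasure_cubeDensity (hb : ∀ y ∈ unitCube ι, g y ≤ b) :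
    IsFiniteMeasure (cubeDensity g) := by
  refine ⟨(cubeDensity_le hb _).trans_lt ?_⟩
  rw [Measure.smul_apply, Measure.restrict_apply_univ, volume_unitCube]
  exact ENNReal.mul_lt_top ENNReal.ofReal_lt_top ENNReal.one_lt_top

theorem cubeDensity_real_le (hb0 : 0 ≤ b) (hb : ∀ y ∈ unitCube ι, g y ≤ b)
    (hs : volume s ≠ ⊤) : (cubeDensity g).real s ≤ b * volume.real s := by
  have h : cubeDensity g s ≤ ENNReal.ofReal b * volume s :=
    (cubeDensity_le hb s).trans (mul_le_mul_right (Measure.restrict_apply_le _ s) _)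
  rw [measureReal_def, measureReal_def, ← ENNReal.toReal_ofReal_mul _ _ hb0]
  exact ENNReal.toReal_mono (ENNReal.mul_ne_top ENNReal.ofReal_ne_top hs) h

theorem le_cubeDensity_real [IsFiniteMeasure (cubeDensity g)] (ha0 : 0 ≤ a)
    (ha : ∀ y ∈ unitCube ι, a ≤ g y) (hs : s ⊆ unitCube ι) :
    a * volume.real s ≤ (cubeDensity g).real s := by
  have h : ENNReal.ofReal a * volume s ≤ cubeDensity g s := by
    simpa [Measure.restrict_eq_self _ hs] using le_cubeDensity ha s
  rw [measureReal_def, measureReal_def, ← ENNReal.toReal_ofReal_mul _ _ ha0]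
  exact ENNReal.toReal_mono (measure_ne_top _ s) h

end CubeDensity

/-- `μ` is concentrated on the unit cube, and its distribution function differs from the one with
density `g` by at most `E`, uniformly on the cube. -/
structure HasDiscrepancyLE {ι : Type*} [Fintype ι] (μ : Measure (ι → ℝ)) (g : (ι → ℝ) → ℝ)
    (E : ℝ) : Prop where
  compl_unitCube : μ (unitCube ι)ᶜ = 0
  abs_sub_le : ∀ x ∈ unitCube ι,
    |μ.real (Set.Iic x) - ∫ y in Set.univ.pi fun k => Set.Icc 0 (x k), g y| ≤ E

namespace HasDiscrepancyLE

variable {ι : Type*} [Fintype ι] {μ : Measure (ι → ℝ)} {g : (ι → ℝ) → ℝ} {E E' a b : ℝ}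
  {α β x : ι → ℝ}

theorem mono (h : HasDiscrepancyLE μ g E) (hE : E ≤ E') : HasDiscrepancyLE μ g E' :=
  ⟨h.1, fun x hx => (h.2 x hx).trans hE⟩

theorem abs_measureReal_Iic_sub_le (h : HasDiscrepancyLE μ g E) (hg : Measurable g)
    (hg0 : ∀ y ∈ unitCube ι, 0 ≤ g y) (hx : x ≤ 1) :
    |μ.real (Set.Iic x) - (cubeDensity g).real (Set.Iic x)| ≤ E := by
  rw [cubeDensity_real hg hg0 measurableSet_Iic]
  by_cases hx0 : 0 ≤ x
  · rw [Iic_inter_unitCube hx]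
    exact h.abs_sub_le x (mem_unitCube_iff.2 ⟨hx0, hx⟩)
  · have hdisj := Iic_disjoint_unitCube hx0
    have hμx : μ.real (Set.Iic x) = 0 := by
      rw [measureReal_def, measure_mono_null hdisj.subset_compl_right h.compl_unitCube,
        ENNReal.toReal_zero]
    rw [hμx, hdisj.inter_eq, setIntegral_empty, sub_zero, abs_zero]
    exact (abs_nonneg _).trans (h.abs_sub_le 0 (mem_unitCube_iff.2 ⟨le_rfl, zero_le_one⟩))

variable [IsFiniteMeasure μ]

theorem measureReal_pi_Ioc_le (h : HasDiscrepancyLE μ g E) (hg : Measurable g)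
    (hg0 : ∀ y ∈ unitCube ι, 0 ≤ g y) (hb : ∀ y ∈ unitCube ι, g y ≤ b) (hαβ : α ≤ β)
    (hβ : β ≤ 1) :
    μ.real (Set.univ.pi fun k => Set.Ioc (α k) (β k)) ≤
      b * ∏ k, (β k - α k) + 2 ^ Fintype.card ι * E := by
  have h0 : 0 ∈ unitCube ι := mem_unitCube_iff.2 ⟨le_rfl, zero_le_one⟩
  have := isFiniteMeasure_cubeDensity hb
  have hdiff := abs_measureReal_pi_Ioc_sub_le hαβ fun x hx =>
    h.abs_measureReal_Iic_sub_le hg hg0 (hx.trans hβ)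
  have hvol : volume (Set.univ.pi fun k => Set.Ioc (α k) (β k)) ≠ ⊤ := by
    simp [Real.volume_pi_Ioc, ENNReal.prod_ne_top]
  have hmass := cubeDensity_real_le ((hg0 0 h0).trans (hb 0 h0)) hb hvol
  rw [measureReal_def volume, Real.volume_pi_Ioc_toReal hαβ] at hmass
  linarith [(abs_le.1 hdiff).2]

theorem le_measureReal_pi_Ioc (h : HasDiscrepancyLE μ g E) (hg : Measurable g) (ha0 : 0 ≤ a)
    (ha : ∀ y ∈ unitCube ι, a ≤ g y) (hb : ∀ y ∈ unitCube ι, g y ≤ b) (hα : 0 ≤ α)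
    (hαβ : α ≤ β) (hβ : β ≤ 1) :
    a * ∏ k, (β k - α k) - 2 ^ Fintype.card ι * E ≤
      μ.real (Set.univ.pi fun k => Set.Ioc (α k) (β k)) := by
  have := isFiniteMeasure_cubeDensity hb
  have hdiff := abs_measureReal_pi_Ioc_sub_le hαβ fun x hx =>
    h.abs_measureReal_Iic_sub_le hg (fun y hy => ha0.trans (ha y hy)) (hx.trans hβ)
  have hsub : (Set.univ.pi fun k => Set.Ioc (α k) (β k)) ⊆ unitCube ι :=
    Set.pi_mono fun k _ y hy => ⟨(hα k).trans hy.1.le, hy.2.trans (hβ k)⟩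
  have hmass := le_cubeDensity_real ha0 ha hsub
  rw [measureReal_def volume, Real.volume_pi_Ioc_toReal hαβ] at hmass
  linarith [(abs_le.1 hdiff).1]

end HasDiscrepancyLE

/-- The tensor-product spline with knots `ks`, orders `q` and B-spline coefficients `θ`. The
B-splines of `ks k` are indexed by `1, …, N + q`, hence the shift of `j : Fin (N + q)`. -/
noncomputable def spline {ι : Type*} [Fintype ι] [DecidableEq ι] (ks : ι → KnotSeq) (q : ι → ℕ)
    (θ : (∀ k, Fin ((ks k).N + q k)) → ℝ) (x : ι → ℝ) : ℝ :=
  tensorEval θ fun k j => Bspl (ks k).T (q k) (((j : ℕ) : ℤ) + 1) (x k)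

/-- A half-open box outside of which the tensor-product B-spline of index `j` vanishes. The left
endpoint lies strictly below the support, so that no mass at a knot is missed. -/
def supportBox {ι : Type*} (ks : ι → KnotSeq) (q : ι → ℕ) (j : ∀ k, Fin ((ks k).N + q k)) :
    Set (ι → ℝ) :=
  Set.univ.pi fun k =>
    Set.Ioc ((ks k).T (((j k : ℕ) : ℤ) + 1 - q k) - (ks k).mesh) ((ks k).T (((j k : ℕ) : ℤ) + 1))

section SupportBox

variable {ι : Type*} [Countable ι] {ks : ι → KnotSeq} {q : ι → ℕ}

theorem measurableSet_supportBox (j : ∀ k, Fin ((ks k).N + q k)) :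
    MeasurableSet (supportBox ks q j) :=
  .univ_pi fun _ => measurableSet_Ioc

theorem integrable_indicator_supportBox (μ : Measure (ι → ℝ)) [IsFiniteMeasure μ]
    (j : ∀ k, Fin ((ks k).N + q k)) :
    Integrable ((supportBox ks q j).indicator (1 : (ι → ℝ) → ℝ)) μ :=
  Integrable.indicator (f := 1) (integrable_const (1 : ℝ)) (measurableSet_supportBox j)

end SupportBox

namespace spline

variable {ι : Type*} [Fintype ι] [DecidableEq ι] {ks : ι → KnotSeq} {q : ι → ℕ}
  (θ : (∀ k, Fin ((ks k).N + q k)) → ℝ)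

theorem measurable : Measurable (spline ks q θ) :=
  Finset.measurable_fun_sum _ fun _ _ => (Finset.measurable_fun_prod _ fun k _ =>
    (Bspl.measurable _ _ _).comp (measurable_pi_apply k)).const_mul _

theorem sq_le_sum_mul_indicator (x : ι → ℝ) :
    spline ks q θ x ^ 2 ≤ ∑ j, θ j ^ 2 * (supportBox ks q j).indicator 1 x := by
  refine (tensorEval_sq_le θ (fun k _ => Bspl.nonneg (ks k).T_monotone _ _ _)
    fun k => ?_).trans (Finset.sum_le_sum fun j _ => mul_le_mul_of_nonneg_left ?_ (sq_nonneg _))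
  · have hinj : Function.Injective fun j : Fin ((ks k).N + q k) => ((j : ℕ) : ℤ) + 1 :=
      fun a b h => Fin.ext (by simpa using h)
    simpa using Bspl.sum_le_one (ks k).T_monotone (ks k).T_le_one (x k) (q k)
      (Finset.univ.map ⟨_, hinj⟩)
  · rw [supportBox, ← Finset.coe_univ, Set.indicator_pi_one_apply]
    refine Finset.prod_le_prod (fun k _ => Bspl.nonneg (ks k).T_monotone _ _ _) fun k _ => ?_
    refine Set.le_indicator_apply (fun _ => ?_) fun hx => ?_
    · exact (le_abs_self _).trans (Bspl.abs_le_one (ks k).T_monotone (ks k).T_le_one _ _ _)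
    · by_contra! h
      obtain ⟨h0, h1⟩ := Bspl.mem_Icc_of_ne_zero (ks k).T_monotone h.ne'
      exact hx ⟨by linarith [(ks k).mesh_pos], h1⟩

variable {μ : Measure (ι → ℝ)} [IsFiniteMeasure μ]

theorem integrable_sq : Integrable (fun x => spline ks q θ x ^ 2) μ :=
  Integrable.mono'
    (integrable_finsetSum _ fun j _ => (integrable_indicator_supportBox μ j).const_mul (θ j ^ 2))
    ((measurable θ).pow_const 2).aestronglyMeasurable <| .of_forall fun x => by
      rw [Real.norm_of_nonneg (sq_nonneg _)]
      exact sq_le_sum_mul_indicator θ x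

theorem integral_sq_le {V : ℝ} (hV : ∀ j, μ.real (supportBox ks q j) ≤ V) :
    ∫ x, spline ks q θ x ^ 2 ∂μ ≤ V * ∑ j, θ j ^ 2 := by
  have hint (j) := (integrable_indicator_supportBox μ j).const_mul (θ j ^ 2)
  calc ∫ x, spline ks q θ x ^ 2 ∂μ
      ≤ ∫ x, ∑ j, θ j ^ 2 * (supportBox ks q j).indicator 1 x ∂μ :=
        integral_mono (integrable_sq θ) (integrable_finsetSum _ fun j _ => hint j)
          (sq_le_sum_mul_indicator θ)
    _ = ∑ j, θ j ^ 2 * μ.real (supportBox ks q j) := by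
        rw [integral_finsetSum _ fun j _ => hint j]
        refine Finset.sum_congr rfl fun j _ => ?_
        rw [integral_const_mul, integral_indicator_one (measurableSet_supportBox j)]
    _ ≤ V * ∑ j, θ j ^ 2 := by
        rw [Finset.mul_sum]
        refine Finset.sum_le_sum fun j _ => ?_
        rw [mul_comm]
        exact mul_le_mul_of_nonneg_right (hV j) (sq_nonneg _)

end spline

section Cells

variable {ι : Type*} {ks : ι → KnotSeq} {q : ι → ℕ}

/-- The index of the `r`-th tensor-product B-spline that is active on the knot cell `l`. -/
def cellIndex (l : ∀ k, Fin ((ks k).N + 1)) (r : ∀ k, Fin (q k)) (k : ι) :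
    Fin ((ks k).N + q k) :=
  ⟨l k + r k, by have := (l k).2; have := (r k).2; omega⟩

theorem cellIndex_injective (l : ∀ k, Fin ((ks k).N + 1)) :
    Function.Injective (cellIndex (q := q) l) := fun r r' h => by
  ext k
  simpa [cellIndex] using congrArg Fin.val (congrFun h k)

theorem exists_cellIndex_eq (hq : ∀ k, 1 ≤ q k) (j : ∀ k, Fin ((ks k).N + q k)) :
    ∃ l r, cellIndex l r = j := by
  have hlt (k) : (j k : ℕ) - min (j k : ℕ) (ks k).N < q k := by
    have := (j k).2
    have := hq k
    omega
  refine ⟨fun k => ⟨min (j k : ℕ) (ks k).N, by omega⟩,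
    fun k => ⟨j k - min (j k : ℕ) (ks k).N, hlt k⟩, ?_⟩
  ext k
  simp only [cellIndex]
  omega

theorem sum_sq_le_sum_sum_sq_cellIndex [Fintype ι] [DecidableEq ι] (hq : ∀ k, 1 ≤ q k)
    (θ : (∀ k, Fin ((ks k).N + q k)) → ℝ) :
    ∑ j, θ j ^ 2 ≤ ∑ l, ∑ r, θ (cellIndex l r) ^ 2 := by
  rw [← Fintype.sum_prod_type']
  have hsurj : Function.Surjective fun p : (∀ k, Fin ((ks k).N + 1)) × (∀ k, Fin (q k)) =>
      cellIndex p.1 p.2 := fun j => by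
    obtain ⟨l, r, h⟩ := exists_cellIndex_eq hq j
    exact ⟨(l, r), h⟩
  obtain ⟨s, hs⟩ := hsurj.hasRightInverse
  calc ∑ j, θ j ^ 2 = ∑ p ∈ Finset.univ.map ⟨s, hs.injective⟩, θ (cellIndex p.1 p.2) ^ 2 := by
        rw [Finset.sum_map]
        exact Finset.sum_congr rfl fun j _ => congrArg (θ · ^ 2) (hs j).symm
    _ ≤ _ := Finset.sum_le_univ_sum_of_nonneg fun _ => sq_nonneg _

/-- The half-open cell of the knot grid with lower left corner `(T (l k))_k`. -/
def knotCell (l : ∀ k, Fin ((ks k).N + 1)) : Set (ι → ℝ) :=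
  Set.univ.pi fun k => Set.Ico ((ks k).T (l k : ℕ)) ((ks k).T ((l k : ℕ) + 1))

theorem measurableSet_knotCell [Countable ι] (l : ∀ k, Fin ((ks k).N + 1)) :
    MeasurableSet (knotCell l) :=
  .univ_pi fun _ => measurableSet_Ico

theorem pairwise_disjoint_knotCell : Pairwise (Function.onFun Disjoint (knotCell (ks := ks))) :=
  fun l l' hne => by
    obtain ⟨k, hk⟩ := Function.ne_iff.1 hne
    refine Set.disjoint_univ_pi.2 ⟨k, ?_⟩
    have hdisj := (ks k).T_monotone.pairwise_disjoint_on_Ico_succ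
      (i := ((l k : ℕ) : ℤ)) (j := ((l' k : ℕ) : ℤ)) (by simpa [Fin.ext_iff] using hk)
    simpa [Function.onFun] using hdisj

theorem spline.eq_tensorEval_of_mem_knotCell [Fintype ι] [DecidableEq ι]
    (θ : (∀ k, Fin ((ks k).N + q k)) → ℝ) {l : ∀ k, Fin ((ks k).N + 1)} {x : ι → ℝ}
    (hx : x ∈ knotCell l) :
    spline ks q θ x = tensorEval (fun r => θ (cellIndex l r)) fun k r =>
      Bspl (ks k).T (q k) ((l k : ℕ) + (r : ℕ) + 1) (x k) := by
  refine (Fintype.sum_of_injective _ (cellIndex_injective l) _ _ (fun j hj => ?_)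
    fun r => by simp [cellIndex]).symm
  obtain ⟨k, hk⟩ : ∃ k, (j k : ℕ) < l k ∨ (l k : ℕ) + q k ≤ j k := by
    by_contra! h
    refine hj ⟨fun k => ⟨j k - l k, by have := h k; omega⟩, ?_⟩
    ext k
    have := h k
    simp only [cellIndex]
    omega
  refine mul_eq_zero_of_right _ (Finset.prod_eq_zero (Finset.mem_univ k) ?_)
  exact Bspl.eq_zero_of_mem_Ico (ks k).T_monotone (ks k).T_le_one (hx k trivial) (by omega)

/-- The box with side lengths `η * (T (l k + 1) - T (l k))` whose upper corner is the node `m` of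
the cell `l`; the spline is bounded below on one of these boxes. -/
def nodeBox (ks : ι → KnotSeq) (q : ι → ℕ) (η : ℝ) (l : ∀ k, Fin ((ks k).N + 1))
    (m : ∀ k, Fin (q k)) : Set (ι → ℝ) :=
  Set.univ.pi fun k =>
    Set.Ioc (Bspl.node (ks k).T (l k : ℕ) (q k) (m k) -
        η * ((ks k).T ((l k : ℕ) + 1) - (ks k).T (l k : ℕ)))
      (Bspl.node (ks k).T (l k : ℕ) (q k) (m k))

variable {η : ℝ} {l : ∀ k, Fin ((ks k).N + 1)} {m : ∀ k, Fin (q k)}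

theorem T_le_node_sub {k : ι} (hη : η ≤ ((q k : ℝ) + 1)⁻¹) :
    (ks k).T (l k : ℕ) ≤ Bspl.node (ks k).T (l k : ℕ) (q k) (m k) -
      η * ((ks k).T ((l k : ℕ) + 1) - (ks k).T (l k : ℕ)) := by
  have hgap := sub_pos.2 ((ks k).T_lt_T_add_one (l k).2)
  have hnode := mul_le_mul_of_nonneg_right (hη.trans (Bspl.inv_le_refNode (q k) (m k))) hgap.le
  rw [Bspl.node]
  linarith

theorem nodeBox_subset_knotCell (hη : ∀ k, η ≤ ((q k : ℝ) + 1)⁻¹) :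
    nodeBox ks q η l m ⊆ knotCell l := fun _ hx k _ =>
  ⟨(T_le_node_sub (hη k)).trans (hx k trivial).1.le,
    (hx k trivial).2.trans_lt (Bspl.node_mem_Ico ((ks k).T_lt_T_add_one (l k).2) (m k)).2⟩

theorem abs_Bspl_node_sub_le_of_mem_nodeBox (hη : ∀ k, η ≤ ((q k : ℝ) + 1)⁻¹) {x : ι → ℝ}
    (hx : x ∈ nodeBox ks q η l m) (k : ι) (j : ℤ) :
    |Bspl (ks k).T (q k) j (Bspl.node (ks k).T (l k : ℕ) (q k) (m k)) -
      Bspl (ks k).T (q k) j (x k)| ≤ 4 ^ q k * η := by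
  have hl := (ks k).T_lt_T_add_one (l k).2
  have hdist := hx k trivial
  refine (Bspl.abs_sub_le (ks k).T_monotone (ks k).T_le_one (Bspl.node_mem_Ico hl (m k))
    (nodeBox_subset_knotCell hη hx k trivial) (q k) j).trans ?_
  gcongr
  rw [div_le_iff₀ (sub_pos.2 hl), abs_of_nonneg (sub_nonneg.2 hdist.2)]
  linarith [hdist.1]

/-- The constant in the lower bound for a spline in terms of its active coefficients: the product
over the directions of the bounds for the inverse collocation matrices. -/
noncomputable def tensorDualBound [Fintype ι] (q : ι → ℕ) (C₀ : ℝ) : ℝ :=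
  ∏ k, Bspl.dualBound (q k) (q k * C₀)

theorem tensorDualBound_pos [Fintype ι] (q : ι → ℕ) (C₀ : ℝ) : 0 < tensorDualBound q C₀ :=
  Finset.prod_pos fun _ _ => Bspl.dualBound_pos _ _

variable [Fintype ι] [DecidableEq ι] {C₀ : ℝ}

theorem exists_forall_mem_nodeBox_abs_le (hq : ∀ k, 1 ≤ q k)
    (hks : ∀ k, (ks k).QuasiUniform C₀) (hη : ∀ k, η ≤ ((q k : ℝ) + 1)⁻¹)
    (hηC : tensorDualBound q C₀ * (Fintype.card (∀ k, Fin (q k)) * ∑ k, 4 ^ q k * η) ≤ 1 / 2)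
    (θ : (∀ k, Fin ((ks k).N + q k)) → ℝ) (l : ∀ k, Fin ((ks k).N + 1)) :
    ∃ m, ∀ x ∈ nodeBox ks q η l m, ∀ r,
      |θ (cellIndex l r)| ≤ 2 * tensorDualBound q C₀ * |spline ks q θ x| := by
  have hcol (k : ι) := Bspl.exists_collocation_mul_eq_one (q := q k) (ks k).T_monotone
    (ks k).T_le_one ((ks k).T_lt_T_add_one (l k).2) fun i hi => (hks k).abs_T_sub_le (l k).2 hi
  choose M hcolM hM using hcol
  have hne (k : ι) : Nonempty (Fin (q k)) := ⟨⟨0, hq k⟩⟩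
  obtain ⟨m, hm⟩ :=
    exists_forall_abs_le_prod_mul_abs_tensorEval (fun r => θ (cellIndex l r)) hcolM hM
  refine ⟨m, fun x hx => ?_⟩
  rw [spline.eq_tensorEval_of_mem_knotCell θ (nodeBox_subset_knotCell hη hx)]
  have habs (k : ι) (j : ℤ) (y : ℝ) := Bspl.abs_le_one (ks k).T_monotone (ks k).T_le_one (q k) j y
  exact abs_le_two_mul_abs_tensorEval (tensorDualBound_pos q C₀).le (fun k _ => habs k _ _)
    (fun k _ => habs k _ _) hm (fun k _ => abs_Bspl_node_sub_le_of_mem_nodeBox hη hx k _) hηC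

theorem mul_sum_sq_cellIndex_le {μ : Measure (ι → ℝ)} [IsFiniteMeasure μ] (hq : ∀ k, 1 ≤ q k)
    (hks : ∀ k, (ks k).QuasiUniform C₀) (hη : ∀ k, η ≤ ((q k : ℝ) + 1)⁻¹)
    (hηC : tensorDualBound q C₀ * (Fintype.card (∀ k, Fin (q k)) * ∑ k, 4 ^ q k * η) ≤ 1 / 2)
    {κ : ℝ} (hκ : ∀ l m, κ ≤ μ.real (nodeBox ks q η l m))
    (θ : (∀ k, Fin ((ks k).N + q k)) → ℝ) (l : ∀ k, Fin ((ks k).N + 1)) :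
    κ * ∑ r, θ (cellIndex l r) ^ 2 ≤
      (∏ k, (q k : ℝ)) * (2 * tensorDualBound q C₀) ^ 2 *
        ∫ x in knotCell l, spline ks q θ x ^ 2 ∂μ := by
  obtain ⟨m, hm⟩ := exists_forall_mem_nodeBox_abs_le hq hks hη hηC θ l
  set K : ℝ := (∏ k, (q k : ℝ)) * (2 * tensorDualBound q C₀) ^ 2
  have hpt (x) (hx : x ∈ nodeBox ks q η l m) :
      ∑ r, θ (cellIndex l r) ^ 2 ≤ K * spline ks q θ x ^ 2 :=
    calc ∑ r, θ (cellIndex l r) ^ 2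
        ≤ ∑ _r : ∀ k, Fin (q k), (2 * tensorDualBound q C₀ * |spline ks q θ x|) ^ 2 :=
          Finset.sum_le_sum fun r _ => sq_le_sq' (neg_le_of_abs_le (hm x hx r))
            (le_of_abs_le (hm x hx r))
      _ = K * spline ks q θ x ^ 2 := by
          simp only [Finset.sum_const, Finset.card_univ, Fintype.card_pi, Fintype.card_fin,
            nsmul_eq_mul, Nat.cast_prod, mul_pow, sq_abs, K]
          ring
  have hint : Integrable (fun x => K * spline ks q θ x ^ 2) μ :=
    (spline.integrable_sq θ).const_mul K
  calc κ * ∑ r, θ (cellIndex l r) ^ 2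
      ≤ (∑ r, θ (cellIndex l r) ^ 2) * μ.real (nodeBox ks q η l m) := by
        rw [mul_comm]
        exact mul_le_mul_of_nonneg_left (hκ l m) (Finset.sum_nonneg fun _ _ => sq_nonneg _)
    _ ≤ ∫ x in nodeBox ks q η l m, K * spline ks q θ x ^ 2 ∂μ :=
        setIntegral_ge_of_const_le_real (.univ_pi fun _ => measurableSet_Ioc)
          (measure_ne_top _ _) hpt hint.integrableOn
    _ ≤ ∫ x in knotCell l, K * spline ks q θ x ^ 2 ∂μ :=
        setIntegral_mono_set hint.integrableOn (.of_forall fun _ => by positivity)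
          (nodeBox_subset_knotCell hη).eventuallyLE
    _ = K * ∫ x in knotCell l, spline ks q θ x ^ 2 ∂μ := integral_const_mul _ _

theorem mul_sum_sq_le_integral_spline_sq {μ : Measure (ι → ℝ)} [IsFiniteMeasure μ]
    (hq : ∀ k, 1 ≤ q k) (hks : ∀ k, (ks k).QuasiUniform C₀)
    (hη : ∀ k, η ≤ ((q k : ℝ) + 1)⁻¹)
    (hηC : tensorDualBound q C₀ * (Fintype.card (∀ k, Fin (q k)) * ∑ k, 4 ^ q k * η) ≤ 1 / 2)
    {κ : ℝ} (hκ0 : 0 ≤ κ) (hκ : ∀ l m, κ ≤ μ.real (nodeBox ks q η l m))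
    (θ : (∀ k, Fin ((ks k).N + q k)) → ℝ) :
    κ * ∑ j, θ j ^ 2 ≤
      (∏ k, (q k : ℝ)) * (2 * tensorDualBound q C₀) ^ 2 * ∫ x, spline ks q θ x ^ 2 ∂μ := by
  have hcells : ∑ l : ∀ k, Fin ((ks k).N + 1), ∫ x in knotCell l, spline ks q θ x ^ 2 ∂μ ≤
      ∫ x, spline ks q θ x ^ 2 ∂μ := by
    rw [← integral_iUnion_fintype measurableSet_knotCell
      pairwise_disjoint_knotCell fun l => (spline.integrable_sq θ).integrableOn]
    exact setIntegral_le_integral (spline.integrable_sq θ) (.of_forall fun _ => sq_nonneg _)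
  calc κ * ∑ j, θ j ^ 2 ≤ ∑ l, κ * ∑ r, θ (cellIndex l r) ^ 2 := by
        rw [← Finset.mul_sum]
        exact mul_le_mul_of_nonneg_left (sum_sq_le_sum_sum_sq_cellIndex hq θ) hκ0
    _ ≤ ∑ l, (∏ k, (q k : ℝ)) * (2 * tensorDualBound q C₀) ^ 2 *
          ∫ x in knotCell l, spline ks q θ x ^ 2 ∂μ :=
        Finset.sum_le_sum fun l _ => mul_sum_sq_cellIndex_le hq hks hη hηC hκ θ l
    _ ≤ _ := by
        rw [← Finset.mul_sum]
        exact mul_le_mul_of_nonneg_left hcells (by positivity)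

end Cells

section MassOfSplineBoxes

variable {ι : Type*} [Fintype ι] {ks : ι → KnotSeq} {q : ι → ℕ} {C₀ : ℝ} {μ : Measure (ι → ℝ)}
  [IsFiniteMeasure μ] {g : (ι → ℝ) → ℝ} {E a b : ℝ}

theorem HasDiscrepancyLE.measureReal_supportBox_le (h : HasDiscrepancyLE μ g E)
    (hks : ∀ k, (ks k).QuasiUniform C₀) (hg : Measurable g) (hg0 : ∀ y ∈ unitCube ι, 0 ≤ g y)
    (hb : ∀ y ∈ unitCube ι, g y ≤ b) (j : ∀ k, Fin ((ks k).N + q k)) :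
    μ.real (supportBox ks q j) ≤
      b * ∏ k, ((q k + 1) * C₀ * ((ks k).N + 1 : ℝ)⁻¹) + 2 ^ Fintype.card ι * E := by
  have h0 : 0 ∈ unitCube ι := mem_unitCube_iff.2 ⟨le_rfl, zero_le_one⟩
  set β : ι → ℝ := fun k => (ks k).T (((j k : ℕ) : ℤ) + 1)
  set α : ι → ℝ := fun k => (ks k).T (((j k : ℕ) : ℤ) + 1 - q k) - (ks k).mesh
  have hαβ : α ≤ β := fun k =>
    (sub_le_self _ (ks k).mesh_pos.le).trans ((ks k).T_monotone (by omega))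
  have hwidth (k : ι) : β k - α k ≤ (q k + 1) * C₀ * ((ks k).N + 1 : ℝ)⁻¹ := by
    have hT := (ks k).T_add_natCast_sub_le (((j k : ℕ) : ℤ) + 1 - q k) (q k)
    rw [sub_add_cancel] at hT
    calc β k - α k ≤ (q k + 1) * (ks k).mesh := by simp only [α, β]; linarith
      _ ≤ (q k + 1) * (C₀ * ((ks k).N + 1 : ℝ)⁻¹) := by gcongr; exact (hks k).mesh_le
      _ = (q k + 1) * C₀ * ((ks k).N + 1 : ℝ)⁻¹ := (mul_assoc _ _ _).symm
  refine (h.measureReal_pi_Ioc_le hg hg0 hb hαβ fun k => (ks k).T_le_one _).trans ?_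
  have hb0 : 0 ≤ b := (hg0 0 h0).trans (hb 0 h0)
  gcongr with k
  exacts [fun k _ => sub_nonneg.2 (hαβ k), hwidth k]

theorem HasDiscrepancyLE.le_measureReal_nodeBox (h : HasDiscrepancyLE μ g E)
    (hks : ∀ k, (ks k).QuasiUniform C₀) (hg : Measurable g) (ha0 : 0 ≤ a)
    (ha : ∀ y ∈ unitCube ι, a ≤ g y) (hb : ∀ y ∈ unitCube ι, g y ≤ b) {η : ℝ} (hη0 : 0 ≤ η)
    (hη : ∀ k, η ≤ ((q k : ℝ) + 1)⁻¹) (l : ∀ k, Fin ((ks k).N + 1)) (m : ∀ k, Fin (q k)) :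
    a * ∏ k, (η * C₀⁻¹ * ((ks k).N + 1 : ℝ)⁻¹) - 2 ^ Fintype.card ι * E ≤
      μ.real (nodeBox ks q η l m) := by
  have hgap (k : ι) := (ks k).T_lt_T_add_one (l k).2
  refine le_trans ?_ (h.le_measureReal_pi_Ioc hg ha0 ha hb
    (fun k => ((ks k).T_nonneg _).trans (T_le_node_sub (hη k)))
    (fun k => sub_le_self _ (mul_nonneg hη0 (sub_pos.2 (hgap k)).le))
    fun k => (Bspl.node_mem_Ico (hgap k) (m k)).2.le.trans ((ks k).T_le_one _))
  gcongr with k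
  · exact fun k _ => by have := (hks k).pos; positivity
  · rw [sub_sub_cancel, mul_assoc]
    exact mul_le_mul_of_nonneg_left ((hks k).inv_le (l k).2) hη0

end MassOfSplineBoxes

section ProdInv

variable {ι : Type*} [Fintype ι] {N q : ι → ℕ}

theorem prod_inv_add_one_le (hq : ∀ k, 1 ≤ q k) :
    ∏ k, (N k + 1 : ℝ)⁻¹ ≤ (∏ k, (q k : ℝ)) * ∏ k, ((N k + q k : ℕ) : ℝ)⁻¹ := by
  rw [← Finset.prod_mul_distrib]
  refine Finset.prod_le_prod (fun k _ => by positivity) fun k _ => ?_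
  have hqk : (1 : ℝ) ≤ q k := by exact_mod_cast hq k
  push_cast
  rw [← div_eq_mul_inv, inv_eq_one_div, div_le_div_iff₀ (by positivity) (by positivity)]
  nlinarith [mul_nonneg (sub_nonneg.2 hqk) ((N k).cast_nonneg (α := ℝ))]

theorem prod_inv_le_prod_inv_add_one (hq : ∀ k, 1 ≤ q k) :
    ∏ k, ((N k + q k : ℕ) : ℝ)⁻¹ ≤ ∏ k, (N k + 1 : ℝ)⁻¹ := by
  refine Finset.prod_le_prod (fun k _ => by positivity) fun k _ => ?_
  have hqk : (1 : ℝ) ≤ q k := by exact_mod_cast hq k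
  push_cast
  gcongr

theorem prod_inv_natCast_le : ∏ k, (N k : ℝ)⁻¹ ≤
    2 ^ Fintype.card ι * ∏ k, (N k + 1 : ℝ)⁻¹ := by
  rw [← Finset.card_univ, ← Finset.prod_const, ← Finset.prod_mul_distrib]
  refine Finset.prod_le_prod (fun k _ => by positivity) fun k _ => ?_
  rcases (N k).eq_zero_or_pos with h | h
  · simp [h]
  · have hN : (1 : ℝ) ≤ N k := by exact_mod_cast h
    rw [← div_eq_mul_inv, inv_eq_one_div, div_le_div_iff₀ (by positivity) (by positivity)]
    linarith

end ProdInv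

section Bounds

variable {ι : Type*} [Fintype ι]

theorem exists_pos_forall_le_inv_and_mul_sum_le (q : ι → ℕ) (P : ℝ) :
    ∃ η : ℝ, 0 < η ∧ (∀ k, η ≤ ((q k : ℝ) + 1)⁻¹) ∧ P * ∑ k, 4 ^ q k * η ≤ 1 / 2 := by
  have hlim : Filter.Tendsto (fun η : ℝ => P * ∑ k, 4 ^ q k * η) (nhds 0) (nhds 0) :=
    Continuous.tendsto' (by fun_prop) _ _ (by simp)
  have hsmall : ∀ᶠ η : ℝ in nhds 0, (∀ k, η ≤ ((q k : ℝ) + 1)⁻¹) ∧ P * ∑ k, 4 ^ q k * η ≤ 1 / 2 :=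
    (Filter.eventually_all.2 fun k => Iic_mem_nhds (by positivity)).and
      (hlim.eventually_le_const (by norm_num))
  obtain ⟨η, hη, hpos⟩ :=
    ((hsmall.filter_mono nhdsWithin_le_nhds).and (self_mem_nhdsWithin (s := Set.Ioi 0))).exists
  exact ⟨η, hpos, hη⟩

variable [DecidableEq ι] {q : ι → ℕ} {C₀ Kmin Kmax : ℝ}

theorem integral_spline_sq_le_mul_sum_sq (hq : ∀ k, 1 ≤ q k) {ks : ι → KnotSeq}
    (hks : ∀ k, (ks k).QuasiUniform C₀) {μ : Measure (ι → ℝ)} [IsFiniteMeasure μ]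
    {g : (ι → ℝ) → ℝ} (hg : Measurable g) (hg0 : ∀ y ∈ unitCube ι, 0 ≤ g y)
    (hgK : ∀ y ∈ unitCube ι, g y ≤ Kmax)
    (h : HasDiscrepancyLE μ g (∏ k, ((ks k).N + 1 : ℝ)⁻¹))
    (θ : (∀ k, Fin ((ks k).N + q k)) → ℝ) :
    ∫ x, spline ks q θ x ^ 2 ∂μ ≤
      (Kmax * ∏ k, (((q k : ℝ) + 1) * C₀) + 2 ^ Fintype.card ι) * (∏ k, (q k : ℝ)) *
        (∏ k, (((ks k).N + q k : ℕ) : ℝ)⁻¹) * ∑ j, θ j ^ 2 := by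
  have h0 : 0 ∈ unitCube ι := mem_unitCube_iff.2 ⟨le_rfl, zero_le_one⟩
  have hK : 0 ≤ Kmax := (hg0 0 h0).trans (hgK 0 h0)
  have hC₀ : 0 ≤ ∏ k, (((q k : ℝ) + 1) * C₀) := Finset.prod_nonneg fun k _ => by
    have := (hks k).pos
    positivity
  refine spline.integral_sq_le θ fun j => (h.measureReal_supportBox_le hks hg hg0 hgK j).trans ?_
  rw [Finset.prod_mul_distrib, ← mul_assoc, ← add_mul, mul_assoc _ (∏ k, (q k : ℝ))]
  exact mul_le_mul_of_nonneg_left (prod_inv_add_one_le hq) (by positivity)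

theorem exists_mul_sum_sq_le_integral_spline_sq (hq : ∀ k, 1 ≤ q k) (hC₀ : 0 < C₀)
    (hKmin : 0 < Kmin) :
    ∃ ε₀ ∈ Set.Ioo (0 : ℝ) 1, ∃ c > 0, ∀ ks : ι → KnotSeq, (∀ k, (ks k).QuasiUniform C₀) →
      ∀ (μ : Measure (ι → ℝ)) [IsFiniteMeasure μ] (g : (ι → ℝ) → ℝ), Measurable g →
        (∀ y ∈ unitCube ι, Kmin ≤ g y) → (∀ y ∈ unitCube ι, g y ≤ Kmax) →
        HasDiscrepancyLE μ g (ε₀ * ∏ k, ((ks k).N + 1 : ℝ)⁻¹) →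
        ∀ θ : (∀ k, Fin ((ks k).N + q k)) → ℝ,
          c * (∏ k, (((ks k).N + q k : ℕ) : ℝ)⁻¹) * ∑ j, θ j ^ 2 ≤
            ∫ x, spline ks q θ x ^ 2 ∂μ := by
  have hP := tensorDualBound_pos q C₀
  obtain ⟨η, hη0, hη, hηP⟩ := exists_pos_forall_le_inv_and_mul_sum_le q
    (tensorDualBound q C₀ * Fintype.card (∀ k, Fin (q k)))
  rw [mul_assoc] at hηP
  set K : ℝ := (∏ k, (q k : ℝ)) * (2 * tensorDualBound q C₀) ^ 2
  have hK : 0 < K := mul_pos (Finset.prod_pos fun k _ => by exact_mod_cast hq k) (by positivity)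
  set v : ℝ := Kmin * ∏ _k : ι, (η * C₀⁻¹)
  have hv : 0 < v := mul_pos hKmin (Finset.prod_pos fun _ _ => by positivity)
  have hbound : 0 < v / 2 / 2 ^ Fintype.card ι := div_pos (half_pos hv) (by positivity)
  obtain ⟨ε₀, hε0, hε⟩ := exists_between (lt_min one_pos hbound)
  rw [lt_min_iff, lt_div_iff₀ (by positivity)] at hε
  refine ⟨ε₀, ⟨hε0, hε.1⟩, v / 2 / K, by positivity, fun ks hks μ _ g hg hmin hmax h θ => ?_⟩
  set U : ℝ := ∏ k, ((ks k).N + 1 : ℝ)⁻¹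
  have hU : 0 ≤ U := Finset.prod_nonneg fun _ _ => by positivity
  have hmass (l m) : v / 2 * U ≤ μ.real (nodeBox ks q η l m) := by
    refine le_trans ?_ (h.le_measureReal_nodeBox hks hg hKmin.le hmin hmax hη0.le hη l m)
    rw [Finset.prod_mul_distrib, ← mul_assoc]
    linarith [mul_le_mul_of_nonneg_right hε.2.le hU]
  calc v / 2 / K * (∏ k, (((ks k).N + q k : ℕ) : ℝ)⁻¹) * ∑ j, θ j ^ 2
      ≤ v / 2 / K * U * ∑ j, θ j ^ 2 := by
        gcongr
        exact prod_inv_le_prod_inv_add_one hq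
    _ = (v / 2 * U * ∑ j, θ j ^ 2) / K := by ring
    _ ≤ _ := (div_le_iff₀' hK).2 <|
        mul_sum_sq_le_integral_spline_sq hq hks hη hηP (by positivity) hmass θ

theorem statement16_general (hq : ∀ k, 1 ≤ q k) (hC₀ : 0 < C₀) (hKmin : 0 < Kmin) :
    ∃ ε₀ ∈ Set.Ioo (0 : ℝ) 1, ∃ c C : ℝ, 0 < c ∧ c ≤ C ∧
      ∀ ks : ι → KnotSeq, (∀ k, (ks k).QuasiUniform C₀) →
      ∀ (μ : Measure (ι → ℝ)) [IsFiniteMeasure μ] (g : (ι → ℝ) → ℝ), Measurable g →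
        (∀ y ∈ unitCube ι, Kmin ≤ g y) → (∀ y ∈ unitCube ι, g y ≤ Kmax) →
        HasDiscrepancyLE μ g (ε₀ * ∏ k, ((ks k).N + 1 : ℝ)⁻¹) →
        ∀ θ : (∀ k, Fin ((ks k).N + q k)) → ℝ,
          c * (∏ k, (((ks k).N + q k : ℕ) : ℝ)⁻¹) * ∑ j, θ j ^ 2 ≤
              ∫ x, spline ks q θ x ^ 2 ∂μ ∧
            ∫ x, spline ks q θ x ^ 2 ∂μ ≤
              C * (∏ k, (((ks k).N + q k : ℕ) : ℝ)⁻¹) * ∑ j, θ j ^ 2 := by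
  obtain ⟨ε₀, hε₀, c, hc, hlower⟩ :=
    exists_mul_sum_sq_le_integral_spline_sq (Kmax := Kmax) hq hC₀ hKmin
  set C : ℝ := (Kmax * ∏ k, (((q k : ℝ) + 1) * C₀) + 2 ^ Fintype.card ι) * ∏ k, (q k : ℝ)
  refine ⟨ε₀, hε₀, c, max c C, hc, le_max_left _ _, fun ks hks μ _ g hg hmin hmax h θ =>
    ⟨hlower ks hks μ g hg hmin hmax h θ, ?_⟩⟩
  have hU : 0 ≤ ∏ k, ((ks k).N + 1 : ℝ)⁻¹ := Finset.prod_nonneg fun _ _ => by positivity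
  refine (integral_spline_sq_le_mul_sum_sq hq hks hg (fun y hy => hKmin.le.trans (hmin y hy)) hmax
    (h.mono (mul_le_of_le_one_left hU hε₀.2.le)) θ).trans ?_
  gcongr
  exact le_max_right _ _

end Bounds

section EmpiricalMeasure

variable {ι : Type*} {n : ℕ} {X : Fin n → ι → ℝ}

/-- The empirical measure of the design `X`; it is zero when there are no design points. -/
noncomputable def empiricalMeasure (X : Fin n → ι → ℝ) : Measure (ι → ℝ) :=
  ENNReal.ofReal (n : ℝ)⁻¹ • ∑ i, Measure.dirac (X i)

instance : IsFiniteMeasure (empiricalMeasure X) :=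
  Measure.smul_finite _ ENNReal.ofReal_ne_top

theorem natCast_mul_integral_empiricalMeasure {f : (ι → ℝ) → ℝ} (hf : Measurable f) :
    n * ∫ x, f x ∂empiricalMeasure X = ∑ i, f (X i) := by
  rcases n.eq_zero_or_pos with rfl | hn
  · simp
  have hint (i : Fin n) : Integrable f (Measure.dirac (X i)) :=
    integrable_dirac' hf.stronglyMeasurable enorm_lt_top
  rw [empiricalMeasure, integral_smul_measure, integral_finsetSum_measure fun i _ => hint i,
    ENNReal.toReal_ofReal (by positivity), smul_eq_mul, mul_inv_cancel_left₀ (by positivity)]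
  exact Finset.sum_congr rfl fun i _ => integral_dirac' f (X i) hf.stronglyMeasurable

theorem empiricalMeasure_real {s : Set (ι → ℝ)} (hs : MeasurableSet s) :
    (empiricalMeasure X).real s = (n : ℝ)⁻¹ * ∑ i, s.indicator 1 (X i) := by
  have hint := natCast_mul_integral_empiricalMeasure (X := X)
    (measurable_one.indicator hs : Measurable (s.indicator (1 : (ι → ℝ) → ℝ)))
  rw [← hint, integral_indicator_one hs]
  rcases n.eq_zero_or_pos with rfl | hn
  · simp [empiricalMeasure]
  · rw [inv_mul_cancel_left₀ (by positivity)]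

theorem hasDiscrepancyLE_empiricalMeasure [Fintype ι] (hX : ∀ i, X i ∈ unitCube ι)
    {g : (ι → ℝ) → ℝ} {E : ℝ} [∀ i (x : ι → ℝ), Decidable (∀ k, X i k ≤ x k)]
    (hE : ∀ x ∈ unitCube ι, |(n : ℝ)⁻¹ * (∑ i, if ∀ k, X i k ≤ x k then (1 : ℝ) else 0) -
      ∫ y in Set.univ.pi fun k => Set.Icc 0 (x k), g y| ≤ E) :
    HasDiscrepancyLE (empiricalMeasure X) g E where
  compl_unitCube := by
    have hnull (i : Fin n) : Measure.dirac (X i) (unitCube ι)ᶜ = 0 := by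
      rw [Measure.dirac_apply' _ measurableSet_unitCube.compl]
      exact Set.indicator_of_notMem (Set.notMem_compl_iff.2 (hX i)) _
    simp [empiricalMeasure, hnull]
  abs_sub_le x hx := by
    rw [empiricalMeasure_real measurableSet_Iic]
    simp only [Set.indicator_apply, Set.mem_Iic, Pi.le_def, Pi.one_apply]
    convert hE x hx

end EmpiricalMeasure

/-- Fix `d ≥ 1`, orders `q_k ≥ 2`, a quasi-uniformity constant
`C₀ ≥ 1` and `0 < K_min ≤ K_max`. There are `ε₀ ∈ (0,1)` and `0 < c ≤ C`, depending
only on `q, d, C₀, K_min, K_max`, such that whenever the knot sequences are quasi-uniform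
with constant `C₀`, `G` is a distribution function on `[0,1]^d` with density in
`[K_min, K_max]`, and the design points satisfy `sup_x |G_n(x) − G(x)| ≤ ε₀ Π_k N_k⁻¹`,
then `c n (Π_k J_k⁻¹) ‖θ‖² ≤ θᵀBᵀBθ ≤ C n (Π_k J_k⁻¹) ‖θ‖²` for every `θ`. -/
theorem statement16 (d : ℕ) (hd : 1 ≤ d) (q : Fin d → ℕ) (hq : ∀ k, 2 ≤ q k)
    (C₀ Kmin Kmax : ℝ) (hC₀ : 1 ≤ C₀) (hKmin : 0 < Kmin) (hKK : Kmin ≤ Kmax) :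
    ∃ ε₀ ∈ Set.Ioo (0 : ℝ) 1, ∃ c C : ℝ, 0 < c ∧ c ≤ C ∧
      ∀ (ks : Fin d → KnotSeq), (∀ k, (ks k).QuasiUniform C₀) →
      ∀ (n : ℕ) (X : Fin n → Fin d → ℝ), (∀ i k, X i k ∈ Set.Icc (0 : ℝ) 1) →
      ∀ g : (Fin d → ℝ) → ℝ, Measurable g →
        (∀ y ∈ Set.univ.pi fun _ : Fin d => Set.Icc (0 : ℝ) 1, Kmin ≤ g y) →
        (∀ y ∈ Set.univ.pi fun _ : Fin d => Set.Icc (0 : ℝ) 1, g y ≤ Kmax) →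
        (∫ y in Set.univ.pi fun _ : Fin d => Set.Icc (0 : ℝ) 1, g y) = 1 →
        (∀ x ∈ Set.univ.pi fun _ : Fin d => Set.Icc (0 : ℝ) 1,
          |(n : ℝ)⁻¹ * (∑ i, if ∀ k, X i k ≤ x k then (1 : ℝ) else 0) -
              ∫ y in Set.univ.pi fun k => Set.Icc 0 (x k), g y| ≤
            ε₀ * ∏ k, ((ks k).N : ℝ)⁻¹) →
        ∀ θ : ((k : Fin d) → Fin ((ks k).N + q k)) → ℝ,
          c * n * (∏ k, (((ks k).N + q k : ℕ) : ℝ)⁻¹) * (∑ j, θ j ^ 2) ≤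
              (∑ i, (∑ j, θ j *
                ∏ k, Bspl (ks k).T (q k) (((j k : ℕ) : ℤ) + 1) (X i k)) ^ 2) ∧
            (∑ i, (∑ j, θ j *
                ∏ k, Bspl (ks k).T (q k) (((j k : ℕ) : ℤ) + 1) (X i k)) ^ 2) ≤
              C * n * (∏ k, (((ks k).N + q k : ℕ) : ℝ)⁻¹) * (∑ j, θ j ^ 2) := by
  obtain ⟨ε₀, hε₀, c, C, hc, hcC, hbounds⟩ :=
    statement16_general (Kmax := Kmax) (fun k => one_le_two.trans (hq k))
      (zero_lt_one.trans_le hC₀) hKmin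
  have h2 : (1 : ℝ) ≤ 2 ^ d := one_le_pow₀ one_le_two
  refine ⟨ε₀ / 2 ^ d, ⟨div_pos hε₀.1 (by positivity), (div_le_self hε₀.1.le h2).trans_lt hε₀.2⟩,
    c, C, hc, hcC, fun ks hks n X hX g hg hmin hmax _ hE θ => ?_⟩
  have hdisc : HasDiscrepancyLE (empiricalMeasure X) g (ε₀ * ∏ k, ((ks k).N + 1 : ℝ)⁻¹) := by
    refine (hasDiscrepancyLE_empiricalMeasure (fun i k _ => hX i k) hE).mono ?_
    rw [div_mul_eq_mul_div, div_le_iff₀' (by positivity), mul_left_comm]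
    have hprod := prod_inv_natCast_le (N := fun k => (ks k).N)
    rw [Fintype.card_fin] at hprod
    exact mul_le_mul_of_nonneg_left hprod hε₀.1.le
  obtain ⟨hlower, hupper⟩ := hbounds ks hks (empiricalMeasure X) g hg hmin hmax hdisc θ
  have hsum := natCast_mul_integral_empiricalMeasure (X := X)
    ((spline.measurable (ks := ks) (q := q) θ).pow_const 2)
  exact ⟨(mul_le_mul_of_nonneg_left hlower n.cast_nonneg).trans_eq' (by ring) |>.trans_eq hsum,
    hsum.symm.trans_le <| (mul_le_mul_of_nonneg_left hupper n.cast_nonneg).trans_eq (by ring)⟩
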